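/- Kernel estimates for the remainder K^c = K − K^m (Lemma 2.3). Let −3 < γ ≤ 1 and 0 < m ≤ 1. The operator K^c is an integral operator, K^c f(v) = ∫_{ℝ³} k^c(v,η) f(η) dη, with a kernel k^c satisfying (with constants C independent of m): (i) |k^c(v,η)| ≤ C m^{γ−1} |v−η|^{−1} (1+|v|+|η|)^{−(1−γ)} e^{−|v−η|²/10} e^{−(|v|²−|η|²)²/(16|v−η|²)}; (ii) |k^c(v,η)| ≤ C |v−η|^γ e^{−|v|²/4} e^{−|η|²/4} + C |v−η|^{−(3−γ)/2} e^{−|v−η|²/10} e^{−(|v|²−|η|²)²/(16|v−η|²)}; (iii) for any β ≥ 0 and 0 ≤ q < 1/8, ∫_{ℝ³} |k^c(v,η)| · ((1+|v|²)^{β/2} e^{q|v|²})/((1+|η|²)^{β/2} e^{q|η|²}) dη ≤ C m^{γ−1} (1+|v|)^{γ−2}, and also ∫_{ℝ³} |k^c(v,η)| · ((1+|v|²)^{β/2} e^{q|v|²})/((1+|η|²)^{β/2} e^{q|η|²}) dη ≤ C (1+|v|)^{−1}. -/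

import Mathlib

/-!
By linearity in the cutoff, `K - K^m` is the operator with radial factor `X = 1 - χ`
(`Kop_sub_Kcut`), which vanishes on relative speeds below `m`. At fixed `v` each of its three terms
is the integral of `g` against a finite measure, the image of a weight on `V3 × Sph` under
`(u, ω) ↦ v'`, `(u, ω) ↦ u'` or `(u, ω) ↦ u`. Once such a measure is known to lie below an explicit
density, its Radon-Nikodym derivative truncated at this density is a kernel that satisfies the
bound at every point (`exists_kernel`).

For the gain term at `v'` the density comes from Carleman's representation (`carleman_le`): with
`v' = v - s ω` and `v - u = s ω + p`, `p ⊥ ω`, the integral over `(s, ω)` becomes an integral over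
`η = v'`, and the density is `|v - η|⁻¹` times Gaussians times a planar integral in `p` of
`t ^ (γ - 1) X(t)` against a Gaussian, with `t = √(s² + |p|²)`. The planar integral is bounded in
two ways. Since `t ≥ m` on the support of `X`, the negative power of `t` becomes `m ^ (γ - 1)`
together with decay in `|v| + |η|` (`planar_bound_cutoff`), which gives (i). Independently of `m`,
half of the singularity is kept as `|s| ^ ((γ - 1) / 2)` while the other half is integrable in the
plane (`planar_bound_uniform`), which gives (ii). Because `b(φ) ≤ C |cos φ|`, the term at `u'` is
dominated by an expression that the substitution exchanging the two post-collisional velocities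
turns into the one for `v'` (`sphere_swap`). The loss term has the density
`|v - η| ^ γ X(|v - η|)` times Gaussians, and satisfies (i) by `loss_pointwise`.

For (iii) the ratio of weights is absorbed by the Gaussians, thanks to `q < 1 / 8`
(`profile_wgt`). What remains is a moment of a Gaussian in `|x|` and `2 v·x / |x| + |x|`, where
`x = η - v`; the second one confines the angle between `x` and `v`, which gains a factor
`(1 + |v|)⁻¹` (`radial_estimate`).
-/

noncomputable section

open MeasureTheory Real Set
open scoped ENNReal RealInnerProductSpace

/-- The velocity/position space `ℝ³`. -/
abbrev V3 : Type := EuclideanSpace ℝ (Fin 3)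

/-- The normalized global Maxwellian `μ(v) = (2π)⁻¹ e^{-|v|²/2}`. -/
def gm (v : V3) : ℝ := (2 * π)⁻¹ * Real.exp (-‖v‖ ^ 2 / 2)

/-- The boundary Maxwellian `μ_θ(v) = (2πθ²)⁻¹ e^{-|v|²/(2θ)}` at temperature `θ`. -/
def gmθ (θ : ℝ) (v : V3) : ℝ := (2 * π * θ ^ 2)⁻¹ * Real.exp (-‖v‖ ^ 2 / (2 * θ))

/-- The velocity weight `w_{q,β}(v) = (1+|v|²)^{β/2} e^{q|v|²}`. -/
def wgt (q β : ℝ) (v : V3) : ℝ := (1 + ‖v‖ ^ 2) ^ (β / 2) * Real.exp (q * ‖v‖ ^ 2)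

/-- The unit sphere `S²`. -/
abbrev Sph : Type := Metric.sphere (0 : V3) 1

/-- The surface measure on the unit sphere. -/
def sphM : Measure Sph := (volume : Measure V3).toSphere

/-- Post-collisional velocity `v' = v - [(v-u)·ω] ω`. -/
def vpost (v u : V3) (ω : Sph) : V3 := v - ⟪v - u, (ω : V3)⟫ • (ω : V3)

/-- Post-collisional velocity `u' = u + [(v-u)·ω] ω`. -/
def upost (v u : V3) (ω : Sph) : V3 := u + ⟪v - u, (ω : V3)⟫ • (ω : V3)

/-- The collision kernel `B(z,ω) = |z|^γ b(cos φ)`, `cos φ = z·ω/|z|`. -/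
def Bker (γ : ℝ) (b : ℝ → ℝ) (z : V3) (ω : Sph) : ℝ :=
  ‖z‖ ^ γ * b (⟪z, (ω : V3)⟫ / ‖z‖)

/-- Admissible angular kernel: measurable with `0 ≤ b(s) ≤ C|s|`. -/
def KernelOK (b : ℝ → ℝ) : Prop :=
  Measurable b ∧ ∃ Cb : ℝ, ∀ s, 0 ≤ b s ∧ b s ≤ Cb * |s|

/-- The Boltzmann collision operator `Q(G,F)`. -/
def Qop (γ : ℝ) (b : ℝ → ℝ) (G F : V3 → ℝ) (v : V3) : ℝ :=
  ∫ u : V3, ∫ ω : Sph,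
    Bker γ b (v - u) ω * (G (upost v u ω) * F (vpost v u ω) - G u * F v) ∂sphM

/-- The collision frequency `ν(v) = ∫∫ B(v-u,ω) μ(u) dω du`. -/
def nufreq (γ : ℝ) (b : ℝ → ℝ) (v : V3) : ℝ :=
  ∫ u : V3, ∫ ω : Sph, Bker γ b (v - u) ω * gm u ∂sphM

/-- The operator `K = K₂ - K₁` with a radial cutoff `χ(|v-u|)` inserted
(`χ ≡ 1` recovers `K` itself). -/
def Kcut (γ : ℝ) (b χ : ℝ → ℝ) (f : V3 → ℝ) (v : V3) : ℝ :=
  ∫ u : V3, ∫ ω : Sph, Bker γ b (v - u) ω * χ ‖v - u‖ *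
    (Real.sqrt (gm u * gm (upost v u ω)) * f (vpost v u ω)
      + Real.sqrt (gm u * gm (vpost v u ω)) * f (upost v u ω)
      - Real.sqrt (gm v * gm u) * f u) ∂sphM

/-- The integral operator `K = K₂ - K₁`. -/
def Kop (γ : ℝ) (b : ℝ → ℝ) (f : V3 → ℝ) : V3 → ℝ := Kcut γ b (fun _ => 1) f

/-- The linearized collision operator `L f = -μ^{-1/2}[Q(μ, √μ f) + Q(√μ f, μ)]`. -/
def Lop (γ : ℝ) (b : ℝ → ℝ) (f : V3 → ℝ) (v : V3) : ℝ :=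
  -(Real.sqrt (gm v))⁻¹ *
    (Qop γ b gm (fun u => Real.sqrt (gm u) * f u) v
      + Qop γ b (fun u => Real.sqrt (gm u) * f u) gm v)

/-- The nonlinear collision term `Γ(f,g) = μ^{-1/2} Q(√μ f, √μ g)`. -/
def Γop (γ : ℝ) (b : ℝ → ℝ) (f g : V3 → ℝ) (v : V3) : ℝ :=
  (Real.sqrt (gm v))⁻¹ *
    Qop γ b (fun u => Real.sqrt (gm u) * f u) (fun u => Real.sqrt (gm u) * g u) v

/-- The collision frequency is comparable to `(1+|v|)^γ`. -/
def NuComparable (γ : ℝ) (b : ℝ → ℝ) : Prop :=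
  ∃ c₁ > (0:ℝ), ∃ c₂ > (0:ℝ), ∀ v : V3,
    c₁ * (1 + ‖v‖) ^ γ ≤ nufreq γ b v ∧ nufreq γ b v ≤ c₂ * (1 + ‖v‖) ^ γ

/-- A bounded connected smooth domain `Ω = {ξ < 0}` in `ℝ³`. -/
structure BDomain where
  ξ : V3 → ℝ
  smooth : ContDiff ℝ (⊤ : ℕ∞) ξ
  grad_ne : ∀ x, ξ x = 0 → gradient ξ x ≠ 0
  bounded : Bornology.IsBounded {x : V3 | ξ x < 0}
  connected : IsConnected {x : V3 | ξ x < 0}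

namespace BDomain

/-- The open domain `Ω`. -/
def dom (D : BDomain) : Set V3 := {x | D.ξ x < 0}

/-- The boundary `∂Ω = {ξ = 0}`. -/
def bdry (D : BDomain) : Set V3 := {x | D.ξ x = 0}

/-- The outward unit normal `n(x) = ∇ξ(x)/|∇ξ(x)|`. -/
def nrm (D : BDomain) (x : V3) : V3 := ‖gradient D.ξ x‖⁻¹ • gradient D.ξ x

/-- Convexity of the domain: `∂²ξ ≥ c_ξ |ζ|²`. -/
def IsConvexDom (D : BDomain) : Prop :=
  ∃ cξ > (0:ℝ), ∀ x : V3, D.ξ x ≤ 0 → ∀ ζ : V3,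
    cξ * ‖ζ‖ ^ 2 ≤ iteratedFDeriv ℝ 2 D.ξ x ![ζ, ζ]

/-- The backward exit time `t_b(x,v)`. -/
def exitT (D : BDomain) (x v : V3) : ℝ :=
  sInf {τ : ℝ | 0 ≤ τ ∧ x - τ • v ∉ closure D.dom}

/-- The grazing set `γ₀ ⊆ ∂Ω × ℝ³`. -/
def grazing (D : BDomain) : Set (V3 × V3) :=
  {p | p.1 ∈ D.bdry ∧ ⟪D.nrm p.1, p.2⟫ = 0}

end BDomain

/-- `L^∞(Ω×ℝ³)` sup (as an extended real). -/
def nInt (D : BDomain) (h : V3 → V3 → ℝ) : ℝ≥0∞ :=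
  ⨆ x ∈ D.dom, ⨆ v : V3, ENNReal.ofReal |h x v|

/-- `L^∞(γ)` sup over the whole phase boundary. -/
def nBdry (D : BDomain) (h : V3 → V3 → ℝ) : ℝ≥0∞ :=
  ⨆ x ∈ D.bdry, ⨆ v : V3, ENNReal.ofReal |h x v|

/-- `L^∞(γ₋)` sup over the incoming phase boundary. -/
def nBdryIn (D : BDomain) (h : V3 → V3 → ℝ) : ℝ≥0∞ :=
  ⨆ x ∈ D.bdry, ⨆ v ∈ {v : V3 | ⟪D.nrm x, v⟫ < 0}, ENNReal.ofReal |h x v|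

/-- The diffuse-reflection boundary operator
`P_γ f (x,v) = √μ(v) ∫_{u·n(x)>0} f(u) √μ(u) |u·n(x)| du`. -/
def Pbd (D : BDomain) (f : V3 → ℝ) (x v : V3) : ℝ :=
  Real.sqrt (gm v) *
    ∫ u in {u : V3 | 0 < ⟪D.nrm x, u⟫}, f u * Real.sqrt (gm u) * |⟪D.nrm x, u⟫|

/-- The diffuse-reflection boundary value at temperature `θv`:
`μ_{θv}(v) ∫_{u·n(x)>0} F(u) |u·n(x)| du`. -/
def diffuseBC (D : BDomain) (θv : ℝ) (F : V3 → ℝ) (x v : V3) : ℝ :=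
  gmθ θv v * ∫ u in {u : V3 | 0 < ⟪D.nrm x, u⟫}, F u * |⟪D.nrm x, u⟫|

/-- Mild solution (for all times `t ∈ ℝ`) of
`∂ₜ f + v·∇ₓ f + σ(v) f = g` with prescribed incoming boundary value `bc`:
the Duhamel integral form along characteristics, backward to the first exit time. -/
def IsMildSol (D : BDomain) (σ : V3 → ℝ) (g bc f : ℝ → V3 → V3 → ℝ) : Prop :=
  (∀ t : ℝ, ∀ x ∈ closure D.dom, ∀ v : V3, v ≠ 0 →
      (x ∈ D.bdry → 0 < ⟪D.nrm x, v⟫) →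
      f t x v =
        Real.exp (-σ v * D.exitT x v) *
            bc (t - D.exitT x v) (x - D.exitT x v • v) v
          + ∫ τ in Set.Ioc (t - D.exitT x v) t,
              Real.exp (-σ v * (t - τ)) * g τ (x - (t - τ) • v) v) ∧
  (∀ t : ℝ, ∀ x ∈ D.bdry, ∀ v : V3, ⟪D.nrm x, v⟫ < 0 → f t x v = bc t x v)

/-- Mild solution on `t ≥ 0` of the initial-boundary value problem
`∂ₜ f + v·∇ₓ f + σ(v) f = g`, `f|_{γ₋} = bc`, `f(0) = f0`. -/
def IsMildSolIVP (D : BDomain) (σ : V3 → ℝ) (g bc : ℝ → V3 → V3 → ℝ)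
    (f0 : V3 → V3 → ℝ) (f : ℝ → V3 → V3 → ℝ) : Prop :=
  (∀ t : ℝ, 0 ≤ t → ∀ x ∈ closure D.dom, ∀ v : V3, v ≠ 0 →
      (x ∈ D.bdry → 0 < ⟪D.nrm x, v⟫) →
      f t x v =
        (if D.exitT x v ≤ t then
            Real.exp (-σ v * D.exitT x v) *
              bc (t - D.exitT x v) (x - D.exitT x v • v) v
          else Real.exp (-σ v * t) * f0 (x - t • v) v)
          + ∫ τ in Set.Ioc (max (t - D.exitT x v) 0) t,
              Real.exp (-σ v * (t - τ)) * g τ (x - (t - τ) • v) v) ∧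
  (∀ t : ℝ, 0 ≤ t → ∀ x ∈ D.bdry, ∀ v : V3, ⟪D.nrm x, v⟫ < 0 → f t x v = bc t x v) ∧
  (∀ x ∈ closure D.dom, ∀ v : V3, f 0 x v = f0 x v)

/-- `L²([0,T]; L²(Ω×ℝ³))` norm (as an extended real). -/
def L2T (D : BDomain) (T : ℝ) (h : ℝ → V3 → V3 → ℝ) : ℝ≥0∞ :=
  (∫⁻ t in Set.Icc (0:ℝ) T, ∫⁻ x in D.dom, ∫⁻ v : V3,
      ENNReal.ofReal (h t x v ^ 2)) ^ (1/2 : ℝ)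

/-- A smooth cutoff `χ_m`: `χ ≡ 1` on `[0,m]`, `χ ≡ 0` on `[2m,∞)`, `0 ≤ χ ≤ 1`. -/
def IsCutoff (m : ℝ) (χ : ℝ → ℝ) : Prop :=
  ContDiff ℝ (⊤ : ℕ∞) χ ∧ (∀ s, χ s ∈ Set.Icc (0:ℝ) 1) ∧
    (∀ s ≤ m, χ s = 1) ∧ ∀ s, 2 * m ≤ s → χ s = 0

/-! ### Coordinates and disintegrations of Lebesgue measure -/

/-- Cartesian coordinates adapted to a unit vector `e`: a vector is `s e + a e₁ + c e₂` with
`(e, e₁, e₂)` orthonormal, and Lebesgue measure on `V3` is the product measure. -/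
lemma exists_frame (e : V3) (he : ‖e‖ = 1) : ∃ e1 e2 : V3, ‖e1‖ = 1 ∧ ‖e2‖ = 1 ∧
    ⟪e, e1⟫ = 0 ∧ ⟪e, e2⟫ = 0 ∧ ⟪e1, e2⟫ = 0 ∧
    (∀ x : V3, x = ⟪e, x⟫ • e + ⟪e1, x⟫ • e1 + ⟪e2, x⟫ • e2) ∧
    ∀ F : V3 → ℝ≥0∞, Measurable F →
      ∫⁻ x, F x = ∫⁻ s : ℝ, ∫⁻ p : ℝ × ℝ, F (s • e + p.1 • e1 + p.2 • e2) := by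
  have hon : Orthonormal ℝ (({0} : Set (Fin 3)).domRestrict (fun _ => e)) := by
    constructor
    · intro i; simpa [Set.domRestrict] using he
    · intro i j hij
      exact absurd (Subsingleton.elim i j) hij
  obtain ⟨b, hb⟩ := hon.exists_orthonormalBasis_extension_of_card_eq
    (by simp)
  have hb0 : b 0 = e := hb 0 (by simp)
  refine ⟨b 1, b 2, b.norm_eq_one _, b.norm_eq_one _, ?_, ?_, ?_, ?_, ?_⟩
  · rw [← hb0]; simp
  · rw [← hb0]; simp
  · simp
  · intro x
    have := b.sum_repr' x
    rw [Fin.sum_univ_three, hb0] at this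
    exact this.symm
  · intro F hF
    rw [← b.measurePreserving_repr_symm.lintegral_comp_emb
      b.repr.symm.toHomeomorph.measurableEmbedding]
    rw [← (PiLp.volume_preserving_toLp (Fin 3)).lintegral_comp_emb
      (MeasurableEquiv.toLp 2 (Fin 3 → ℝ)).measurableEmbedding]
    rw [← ((volume_preserving_piFinSuccAbove (fun _ : Fin 3 => ℝ) 0).symm).lintegral_comp_emb
      (MeasurableEquiv.measurableEmbedding _)]
    have hm2 : Measurable fun p : ℝ × (Fin 2 → ℝ) =>
        F (p.1 • e + p.2 0 • b 1 + p.2 1 • b 2) := by fun_prop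
    have key : ∀ p : ℝ × (Fin 2 → ℝ), F (b.repr.symm (WithLp.toLp 2
        ((MeasurableEquiv.piFinSuccAbove (fun _ : Fin 3 => ℝ) 0).symm p)))
        = F (p.1 • e + p.2 0 • b 1 + p.2 1 • b 2) := by
      intro p
      congr 1
      rw [← b.sum_repr_symm, Fin.sum_univ_three, hb0]
      simp [MeasurableEquiv.piFinSuccAbove]
      rfl
    simp_rw [key]
    rw [Measure.volume_eq_prod, lintegral_prod _ hm2.aemeasurable]
    congr 1
    ext s
    rw [← ((volume_preserving_finTwoArrow ℝ).symm).lintegral_comp_emb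
      (MeasurableEquiv.measurableEmbedding _)]
    rfl

/-- Spherical coordinates in the normalisation of `sphM`. -/
lemma lintegral_polar (F : V3 → ℝ≥0∞) (hF : Measurable F) :
    ∫⁻ x, F x = ∫⁻ ω : Sph, ∫⁻ r in Ioi (0 : ℝ),
      ENNReal.ofReal (r ^ 2) * F (r • (ω : V3)) ∂volume ∂sphM := by
  have h1 : ∫⁻ x, F x = ∫⁻ x : ({0}ᶜ : Set V3), F (x : V3) ∂(Measure.comap Subtype.val volume) := by
    rw [lintegral_subtype_comap (measurableSet_singleton _).compl]
    rw [restrict_compl_singleton]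
  have hd : Module.finrank ℝ V3 - 1 = 2 := by simp
  have h2 := (volume : Measure V3).measurePreserving_homeomorphUnitSphereProd
  rw [hd] at h2
  rw [h1, ← (h2.symm (homeomorphUnitSphereProd V3).toMeasurableEquiv).lintegral_comp_emb
    (MeasurableEquiv.measurableEmbedding _)]
  have hm : Measurable fun p : Sph × Ioi (0 : ℝ) => F ((p.2 : ℝ) • (p.1 : V3)) := by fun_prop
  have : ∀ p : Sph × Ioi (0 : ℝ),
      F ((homeomorphUnitSphereProd V3).toMeasurableEquiv.symm p) = F ((p.2 : ℝ) • (p.1 : V3)) := by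
    intro p; rfl
  simp_rw [this]
  rw [lintegral_prod _ hm.aemeasurable]
  refine lintegral_congr fun ω => ?_
  rw [Measure.volumeIoiPow, lintegral_withDensity_eq_lintegral_mul _ (by fun_prop) (by fun_prop)]
  simp only [Pi.mul_apply]
  rw [← lintegral_subtype_comap measurableSet_Ioi
    (fun r : ℝ => ENNReal.ofReal (r ^ 2) * F (r • (ω : V3)))]

/-- Integrating along all lines through the origin covers `V3` twice, with density `|x|⁻²`. -/
lemma lintegral_lines (G : V3 → ℝ≥0∞) (hG : Measurable G) :
    ∫⁻ ω : Sph, ∫⁻ r : ℝ, ENNReal.ofReal (r ^ 2) * G (r • (ω : V3)) ∂volume ∂sphM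
      = 2 * ∫⁻ x, G x := by
  have hneg : ∫⁻ x, G x = ∫⁻ x, G (-x) := (lintegral_neg_eq_self _).symm
  have hsplit : ∀ ω : Sph, ∫⁻ r : ℝ, ENNReal.ofReal (r ^ 2) * G (r • (ω : V3))
      = (∫⁻ r in Ioi (0 : ℝ), ENNReal.ofReal (r ^ 2) * G (r • (ω : V3)))
        + ∫⁻ r in Ioi (0 : ℝ), ENNReal.ofReal (r ^ 2) * G (-(r • (ω : V3))) := by
    intro ω
    rw [← lintegral_add_compl _ (measurableSet_Ioi (a := (0:ℝ)))]
    congr 1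
    rw [compl_Ioi, setLIntegral_congr Iio_ae_eq_Iic.symm,
      ← lintegral_indicator measurableSet_Iio, ← lintegral_indicator measurableSet_Ioi,
      ← lintegral_neg_eq_self]
    refine lintegral_congr fun r => ?_
    simp [Set.indicator]
  simp_rw [hsplit]
  rw [lintegral_add_left, ← lintegral_polar G hG,
    ← lintegral_polar (fun x => G (-x)) (by fun_prop), ← hneg, two_mul]
  refine Measurable.lintegral_prod_right' (f := fun p : Sph × ℝ =>
    ENNReal.ofReal (p.2 ^ 2) * G (p.2 • (p.1 : V3))) ?_
  fun_prop

/-- Polar coordinates in the plane. -/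
lemma lintegral_plane (F : ℝ × ℝ → ℝ≥0∞) (hF : Measurable F) :
    ∫⁻ p, F p = ∫⁻ r in Ioi (0 : ℝ), ENNReal.ofReal r *
      ∫⁻ θ in Ioo (-π) π, F (r * cos θ, r * sin θ) := by
  rw [← lintegral_comp_polarCoord_symm, polarCoord_target, Measure.volume_eq_prod,
    ← Measure.prod_restrict, lintegral_prod]
  · refine lintegral_congr fun r => ?_
    rw [← lintegral_const_mul']
    · rfl
    · simp
  · simp only [polarCoord_symm_apply]
    fun_prop

/-! ### Exchange of the post-collisional velocities -/

/-- A quarter turn of the half-plane `r > 0` in the variables `(s, r)`, up to the reflection that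
brings the image back to `r > 0`: it exchanges the roles of `s` and `r`. -/
lemma lintegral_halfplane_swap (K K' : ℝ × ℝ → ℝ≥0∞) (hK : Measurable K) (hK' : Measurable K')
    (h1 : ∀ s r, 0 < s → 0 < r → K' (s, r) = K (-r, s))
    (h2 : ∀ s r, 0 < s → 0 < r → K' (-s, r) = K (r, s)) :
    ∫⁻ s : ℝ, ∫⁻ r in Ioi (0 : ℝ), K' (s, r) = ∫⁻ s : ℝ, ∫⁻ r in Ioi (0 : ℝ), K (s, r) := by
  have split : ∀ J : ℝ × ℝ → ℝ≥0∞, Measurable J →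
      ∫⁻ s : ℝ, ∫⁻ r in Ioi (0 : ℝ), J (s, r) =
        (∫⁻ s in Ioi (0 : ℝ), ∫⁻ r in Ioi (0 : ℝ), J (s, r)) +
        ∫⁻ s in Ioi (0 : ℝ), ∫⁻ r in Ioi (0 : ℝ), J (-s, r) := by
    intro J hJ
    rw [← lintegral_add_compl _ (measurableSet_Ioi (a := (0:ℝ)))]
    congr 1
    rw [compl_Ioi, setLIntegral_congr Iio_ae_eq_Iic.symm,
      ← lintegral_indicator measurableSet_Iio, ← lintegral_indicator measurableSet_Ioi,
      ← lintegral_neg_eq_self]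
    refine lintegral_congr fun r => ?_
    simp [Set.indicator]
  rw [split K hK, split K' hK', add_comm]
  congr 1
  · rw [lintegral_lintegral_swap (by fun_prop)]
    refine setLIntegral_congr_fun measurableSet_Ioi fun s hs => ?_
    refine setLIntegral_congr_fun measurableSet_Ioi fun r hr => ?_
    exact h2 r s hr hs
  · rw [lintegral_lintegral_swap (by fun_prop)]
    refine setLIntegral_congr_fun measurableSet_Ioi fun s hs => ?_
    refine setLIntegral_congr_fun measurableSet_Ioi fun r hr => ?_
    exact h1 r s hr hs

/-- The integral of a measurable function over the sphere, thickened to an integral over `V3`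
with radial weight `e^{-|x|}`. -/
lemma lintegral_sphere_thicken (G : V3 → ℝ≥0∞) (hG : Measurable G)
    (hom : ∀ (r : ℝ) (ω : Sph), 0 < r → G (r • (ω : V3)) = G ω) :
    ∫⁻ x, ENNReal.ofReal (exp (-‖x‖)) * G x
      = (∫⁻ r in Ioi (0 : ℝ), ENNReal.ofReal (r ^ 2 * exp (-r))) * ∫⁻ ω : Sph, G ω ∂sphM := by
  rw [lintegral_polar _ (by fun_prop), ← lintegral_const_mul _ (by fun_prop)]
  refine lintegral_congr fun ω => ?_
  rw [← lintegral_mul_const _ (by fun_prop)]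
  refine setLIntegral_congr_fun measurableSet_Ioi fun r hr => ?_
  have hr' : 0 < r := hr
  have hn : ‖r • (ω : V3)‖ = r := by
    rw [norm_smul, norm_eq_of_mem_sphere ω, Real.norm_of_nonneg hr'.le, mul_one]
  simp only [hom r ω hr', hn]
  rw [← mul_assoc, ← ENNReal.ofReal_mul (by positivity)]

/-- Exchange of the two post-collisional velocities for the hard-sphere angular weight: the
substitution sends `ω` to the unit vector of the plane spanned by `z` and `ω` orthogonal to `ω`,
which exchanges the component of `z` along `ω` with its complement. -/
lemma sphere_swap (z : V3) (Φ : V3 × V3 → ℝ≥0∞) (hΦ : Measurable Φ) :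
    ∫⁻ ω : Sph, ENNReal.ofReal |⟪z, (ω : V3)⟫| *
        Φ (z - ⟪z, (ω : V3)⟫ • (ω : V3), ⟪z, (ω : V3)⟫ • (ω : V3)) ∂sphM =
    ∫⁻ ω : Sph, ENNReal.ofReal |⟪z, (ω : V3)⟫| *
        Φ (⟪z, (ω : V3)⟫ • (ω : V3), z - ⟪z, (ω : V3)⟫ • (ω : V3)) ∂sphM := by
  rcases eq_or_ne z 0 with rfl | hz
  · simp
  have hzn : 0 < ‖z‖ := norm_pos_iff.2 hz
  set c := ‖z‖ with hc
  set e : V3 := c⁻¹ • z with he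
  have hen : ‖e‖ = 1 := by rw [he, norm_smul, norm_inv, norm_norm]; exact inv_mul_cancel₀ hzn.ne'
  have hze : z = c • e := by rw [he, smul_smul, mul_inv_cancel₀ hzn.ne', one_smul]
  obtain ⟨e1, e2, h1, h2, h01, h02, h12, -, hframe⟩ := exists_frame e hen
  -- the homogeneous extension of the integrand
  let P : V3 → V3 := fun x => (⟪z, x⟫ / ‖x‖ ^ 2) • x
  have hPm : Measurable P := by fun_prop
  have hPs : ∀ ω : Sph, P ω = ⟪z, (ω : V3)⟫ • (ω : V3) := by
    intro ω; simp [P]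
  have hPr : ∀ (r : ℝ) (ω : Sph), 0 < r → P (r • (ω : V3)) = P ω := by
    intro r ω hr
    simp only [P, norm_smul, inner_smul_right, norm_eq_of_mem_sphere ω, smul_smul,
      Real.norm_of_nonneg hr.le]
    congr 1; field_simp
  have hWr : ∀ (r : ℝ) (ω : Sph), 0 < r →
      |⟪z, r • (ω : V3)⟫| / ‖r • (ω : V3)‖ = |⟪z, (ω : V3)⟫| / ‖(ω : V3)‖ := by
    intro r ω hr
    simp only [norm_smul, inner_smul_right, norm_eq_of_mem_sphere ω,
      Real.norm_of_nonneg hr.le, abs_mul, abs_of_pos hr]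
    field_simp
  have thick : ∀ Ψ : V3 × V3 → ℝ≥0∞, Measurable Ψ →
      ∫⁻ x, ENNReal.ofReal (exp (-‖x‖)) * (ENNReal.ofReal (|⟪z, x⟫| / ‖x‖) * Ψ (P x, z - P x))
      = (∫⁻ r in Ioi (0 : ℝ), ENNReal.ofReal (r ^ 2 * exp (-r))) *
        ∫⁻ ω : Sph, ENNReal.ofReal |⟪z, (ω : V3)⟫| *
          Ψ (⟪z, (ω : V3)⟫ • (ω : V3), z - ⟪z, (ω : V3)⟫ • (ω : V3)) ∂sphM := by
    intro Ψ hΨ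
    rw [lintegral_sphere_thicken (fun x => ENNReal.ofReal (|⟪z, x⟫| / ‖x‖) * Ψ (P x, z - P x))
      (by fun_prop)]
    · simp only [hPs, norm_eq_of_mem_sphere, div_one]
    · intro r ω hr
      simp only [hPr r ω hr, hWr r ω hr]
  -- cylindrical coordinates around `z`
  let τ : ℝ → V3 := fun θ => cos θ • e1 + sin θ • e2
  let A : ℝ → ℝ → ℝ → V3 := fun s r θ => (c * s / (s ^ 2 + r ^ 2)) • (s • e + r • τ θ)
  let W : ℝ → ℝ → ℝ := fun s r => |s| * |r| *
    (c * exp (-√(s ^ 2 + r ^ 2)) / √(s ^ 2 + r ^ 2))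
  have he1e : ⟪e1, e⟫ = 0 := by rw [real_inner_comm]; exact h01
  have he2e : ⟪e2, e⟫ = 0 := by rw [real_inner_comm]; exact h02
  have h21 : ⟪e2, e1⟫ = 0 := by rw [real_inner_comm]; exact h12
  have cyl : ∀ Ψ : V3 × V3 → ℝ≥0∞, Measurable Ψ →
      ∫⁻ x, ENNReal.ofReal (exp (-‖x‖)) * (ENNReal.ofReal (|⟪z, x⟫| / ‖x‖) * Ψ (P x, z - P x))
      = ∫⁻ s : ℝ, ∫⁻ r in Ioi (0 : ℝ), ENNReal.ofReal (W s r) *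
          ∫⁻ θ in Ioo (-π) π, Ψ (A s r θ, A r (-s) θ) := by
    intro Ψ hΨ
    rw [hframe _ (by fun_prop)]
    refine lintegral_congr fun s => ?_
    rw [lintegral_plane _ (by fun_prop)]
    refine setLIntegral_congr_fun measurableSet_Ioi fun r hr => ?_
    have hr' : 0 < r := hr
    simp only
    rw [← lintegral_const_mul _ (by fun_prop), ← lintegral_const_mul _ (by fun_prop)]
    refine lintegral_congr fun θ => ?_
    set x : V3 := s • e + (r * cos θ) • e1 + (r * sin θ) • e2 with hx
    have hx' : x = s • e + r • τ θ := by
      simp only [hx, τ, smul_add, smul_smul, add_assoc]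
    have hzx : ⟪z, x⟫ = c * s := by
      rw [hze, hx]; simp [inner_add_right, inner_smul_left, inner_smul_right, h01, h02, hen]; ring
    have hxn2 : ‖x‖ ^ 2 = s ^ 2 + r ^ 2 := by
      rw [← real_inner_self_eq_norm_sq, hx]
      simp only [inner_add_right, inner_add_left, inner_smul_left, inner_smul_right, h01, h02,
        h12, h21, he1e, he2e, real_inner_self_eq_norm_sq, hen, h1, h2]
      simp
      linear_combination (r ^ 2) * (sin_sq_add_cos_sq θ)
    have hxn : ‖x‖ = √(s ^ 2 + r ^ 2) := by
      rw [← hxn2, Real.sqrt_sq (norm_nonneg _)]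
    have hpos : 0 < s ^ 2 + r ^ 2 := by positivity
    have hPx : P x = A s r θ := by
      simp only [P, A, hzx, hxn2, ← hx']
    have hPx' : z - P x = A r (-s) θ := by
      rw [hPx, hze]
      simp only [A, smul_add, smul_smul]
      have : c • e = (c * s / (s ^ 2 + r ^ 2) * s + c * r / (r ^ 2 + (-s) ^ 2) * r) • e := by
        congr 1; field_simp; ring
      rw [this, add_smul]
      have h3 : c * r / (r ^ 2 + (-s) ^ 2) * (-s) = - (c * s / (s ^ 2 + r ^ 2) * r) := by
        rw [show r ^ 2 + (-s) ^ 2 = s ^ 2 + r ^ 2 by ring]; ring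
      rw [h3, neg_smul]
      abel
    rw [hPx', hPx, hzx, hxn, ← mul_assoc, ← mul_assoc, ← ENNReal.ofReal_mul (by positivity),
      ← ENNReal.ofReal_mul (by positivity)]
    congr 2
    simp only [W, abs_mul, abs_of_pos hr', abs_of_pos hzn]
    ring
  have hm : ∀ Ψ : V3 × V3 → ℝ≥0∞, Measurable Ψ → Measurable fun p : ℝ × ℝ =>
      ENNReal.ofReal (W p.1 p.2) * ∫⁻ θ in Ioo (-π) π, Ψ (A p.1 p.2 θ, A p.2 (-p.1) θ) := by
    intro Ψ hΨ
    refine Measurable.mul (by fun_prop) ?_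
    refine Measurable.lintegral_prod_right' (f := fun q : (ℝ × ℝ) × ℝ =>
      Ψ (A q.1.1 q.1.2 q.2, A q.1.2 (-q.1.1) q.2)) ?_
    fun_prop
  have hAneg : ∀ s r θ, A (-s) (-r) θ = A s r θ := by
    intro s r θ
    simp only [A, neg_sq, neg_smul, mul_neg, neg_div, smul_neg, ← neg_add, neg_neg]
  have hWs : ∀ s r, W (-r) s = W s r ∧ W r s = W s r ∧ W (-s) r = W s r := by
    intro s r
    simp only [W, abs_neg, neg_sq, add_comm (r ^ 2) (s ^ 2), mul_comm |r| |s|]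
    simp
  have key := lintegral_halfplane_swap _ _ (hm Φ hΦ) (hm (fun p => Φ p.swap) (by fun_prop))
    (fun s r hs hr => by
      have := hAneg r (-s)
      simp only [neg_neg] at this
      simp only [Prod.swap_prod_mk, (hWs s r).1, this, neg_neg])
    (fun s r hs hr => by
      have := hAneg s (-r)
      simp only [neg_neg] at this
      simp only [Prod.swap_prod_mk, (hWs s r).2.2, (hWs s r).2.1, this, neg_neg])
  simp only at key
  rw [← cyl Φ hΦ, ← cyl (fun p => Φ p.swap) (by fun_prop), thick Φ hΦ,
    thick (fun p => Φ p.swap) (by fun_prop)] at key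
  have hint : IntegrableOn (fun r : ℝ => r ^ 2 * exp (-r)) (Ioi 0) := by
    have := Real.GammaIntegral_convergent (s := 3) (by norm_num)
    refine this.congr_fun (fun r hr => ?_) measurableSet_Ioi
    simp only
    rw [show (3 : ℝ) - 1 = (2 : ℕ) by norm_num, rpow_natCast, mul_comm]
  have hfin : ∫⁻ r in Ioi (0 : ℝ), ENNReal.ofReal (r ^ 2 * exp (-r)) ≠ ⊤ :=
    hint.lintegral_lt_top.ne
  have hne : ∫⁻ r in Ioi (0 : ℝ), ENNReal.ofReal (r ^ 2 * exp (-r)) ≠ 0 := by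
    refine ((setLIntegral_pos_iff (by fun_prop)).2 ?_).ne'
    have : Ioi (0 : ℝ) ⊆ Function.support (fun r : ℝ => ENNReal.ofReal (r ^ 2 * exp (-r)))
        ∩ Ioi 0 := by
      intro r hr
      refine ⟨?_, hr⟩
      have hr' : 0 < r := hr
      simp only [Function.mem_support, ne_eq, ENNReal.ofReal_eq_zero, not_le]
      positivity
    exact lt_of_lt_of_le (by simp) (measure_mono this)
  exact (ENNReal.mul_right_inj hne hfin).1 key

/-! ### Planar Gaussian integrals -/

lemma one_add_rpow_le_exp {p ε : ℝ} (hp : 0 ≤ p) (hε : 0 < ε) {x : ℝ} (hx : 0 ≤ x) :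
    (1 + x) ^ p ≤ exp (p ^ 2 / (4 * ε)) * exp (ε * x ^ 2) := by
  have h1 : (1 + x) ^ p ≤ (exp x) ^ p :=
    rpow_le_rpow (by positivity) (by linarith [add_one_le_exp x]) hp
  rw [← exp_mul] at h1
  refine h1.trans ?_
  rw [← exp_add, exp_le_exp]
  have : p ^ 2 / (4 * ε) + ε * x ^ 2 - x * p = (p / (2 * ε) - x) ^ 2 * ε := by
    field_simp; ring
  nlinarith [mul_nonneg (sq_nonneg (p / (2 * ε) - x)) hε.le]

lemma lintegral_gauss {k : ℝ} (hk : 0 < k) (ζ : ℝ) :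
    ∫⁻ a : ℝ, ENNReal.ofReal (exp (-k * (a - ζ) ^ 2)) = ENNReal.ofReal √(π / k) := by
  rw [lintegral_sub_right_eq_self (fun a : ℝ => ENNReal.ofReal (exp (-k * a ^ 2))) ζ,
    ← integral_gaussian, ofReal_integral_eq_lintegral_ofReal (integrable_exp_neg_mul_sq hk)]
  filter_upwards with a using (exp_pos _).le

/-- Uniformity in `ζ`: the singularity at `0` is integrable and the Gaussian tail does not see the
translation. -/
lemma lintegral_sing_gauss {κ : ℝ} (h0 : 0 ≤ κ) (h1 : κ < 1) : ∃ C > (0 : ℝ), ∀ ζ : ℝ,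
    ∫⁻ a : ℝ, ENNReal.ofReal (|a| ^ (-κ) * exp (-(1 / 2) * (a - ζ) ^ 2)) ≤ ENNReal.ofReal C := by
  have hint : IntegrableOn (fun a : ℝ => |a| ^ (-κ)) (Ioc (-1) 1) := by
    have hp : IntervalIntegrable (fun a : ℝ => |a| ^ (-κ)) volume 0 1 := by
      refine (intervalIntegral.intervalIntegrable_rpow' (a := 0) (b := 1)
        (r := -κ) (by linarith)).congr ?_
      intro a ha
      rw [uIoc_of_le zero_le_one] at ha
      simp only [abs_of_pos ha.1]
    have hn : IntervalIntegrable (fun a : ℝ => |a| ^ (-κ)) volume (-1) 0 := by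
      have := (IntervalIntegrable.iff_comp_neg (f := fun a : ℝ => |a| ^ (-κ))
        (a := 0) (b := 1)).1 hp
      simp only [abs_neg, neg_zero] at this
      exact this.symm
    exact (intervalIntegrable_iff_integrableOn_Ioc_of_le (by norm_num)).1 (hn.trans hp)
  set I := ∫ a in Ioc (-1 : ℝ) 1, |a| ^ (-κ) with hI
  have hI0 : 0 ≤ I := integral_nonneg fun a => by positivity
  refine ⟨I + √(π / (1 / 2)), by positivity, fun ζ => ?_⟩
  have hpt : ∀ a : ℝ, ENNReal.ofReal (|a| ^ (-κ) * exp (-(1 / 2) * (a - ζ) ^ 2)) ≤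
      (Ioc (-1 : ℝ) 1).indicator (fun a => ENNReal.ofReal (|a| ^ (-κ))) a
        + ENNReal.ofReal (exp (-(1 / 2) * (a - ζ) ^ 2)) := by
    intro a
    by_cases ha : a ∈ Ioc (-1 : ℝ) 1
    · rw [indicator_of_mem ha]
      refine le_add_right (ENNReal.ofReal_le_ofReal ?_)
      refine mul_le_of_le_one_right (by positivity) (exp_le_one_iff.2 ?_)
      nlinarith [sq_nonneg (a - ζ)]
    · rw [indicator_of_notMem ha, zero_add]
      refine ENNReal.ofReal_le_ofReal (mul_le_of_le_one_left (exp_pos _).le ?_)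
      refine rpow_le_one_of_one_le_of_nonpos ?_ (by linarith)
      by_contra! h
      exact ha ⟨(abs_lt.1 h).1, (abs_lt.1 h).2.le⟩
  refine (lintegral_mono hpt).trans ?_
  rw [lintegral_add_right _ (by fun_prop), lintegral_gauss (by norm_num),
    lintegral_indicator measurableSet_Ioc, ENNReal.ofReal_add hI0 (by positivity), hI,
    ofReal_integral_eq_lintegral_ofReal hint]
  filter_upwards with a using by positivity

/-- Comparison of the size `1 + T` of the velocities with `1 + t`, where `t = |(s, a, c)|` is the
relative speed, at the cost of factors which a Gaussian absorbs. -/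
lemma one_add_le_planar {s S T ζ₁ ζ₂ : ℝ} (a c : ℝ)
    (hT : T ≤ |S| + |s| + 2 * √(ζ₁ ^ 2 + ζ₂ ^ 2)) :
    1 + T ≤ 3 * (1 + √(s ^ 2 + (a ^ 2 + c ^ 2))) *
      ((1 + √((a - ζ₁) ^ 2 + (c - ζ₂) ^ 2)) * (1 + |S|)) := by
  set t := √(s ^ 2 + (a ^ 2 + c ^ 2)) with ht
  set D := √((a - ζ₁) ^ 2 + (c - ζ₂) ^ 2) with hD
  have ht0 : 0 ≤ t := sqrt_nonneg _
  have hD0 : 0 ≤ D := sqrt_nonneg _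
  have hD2 : D ^ 2 = (a - ζ₁) ^ 2 + (c - ζ₂) ^ 2 := sq_sqrt (by positivity)
  have ht2 : t ^ 2 = s ^ 2 + (a ^ 2 + c ^ 2) := sq_sqrt (by positivity)
  have hst : |s| ≤ t := abs_le_of_sq_le_sq (by nlinarith [sq_nonneg a, sq_nonneg c]) ht0
  have hζ : √(ζ₁ ^ 2 + ζ₂ ^ 2) ≤ t + D := by
    have hcs : |a * (a - ζ₁) + c * (c - ζ₂)| ≤ t * D := by
      refine abs_le_of_sq_le_sq ?_ (by positivity)
      rw [mul_pow, ht2, hD2]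
      nlinarith [sq_nonneg (a * (c - ζ₂) - c * (a - ζ₁)),
        mul_nonneg (sq_nonneg s) (add_nonneg (sq_nonneg (a - ζ₁)) (sq_nonneg (c - ζ₂)))]
    refine sqrt_le_iff.2 ⟨by positivity, ?_⟩
    have := neg_abs_le (a * (a - ζ₁) + c * (c - ζ₂))
    nlinarith [sq_nonneg s]
  have hS := abs_nonneg S
  have e2 : 1 + T ≤ 1 + |S| + 3 * t + 2 * D := by linarith
  nlinarith [mul_nonneg hD0 hS, mul_nonneg ht0 hD0, mul_nonneg ht0 hS,
    mul_nonneg (mul_nonneg ht0 hD0) hS]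

/-- Negative-power form of `one_add_le_planar`: beyond the cutoff, a negative power of the relative
speed `t` gives decay in the velocities, up to powers of quantities controlled by Gaussians. -/
lemma rpow_neg_planar {N m t T D S : ℝ} (hN : 0 ≤ N) (hm : 0 < m) (hm1 : m ≤ 1) (hmt : m ≤ t)
    (hT : 0 ≤ T) (hD : 0 ≤ D) (h : 1 + T ≤ 3 * (1 + t) * ((1 + D) * (1 + |S|))) :
    t ^ (-N) ≤ 6 ^ N * m ^ (-N) * (1 + T) ^ (-N) * ((1 + D) ^ N * (1 + |S|) ^ N) := by
  have ht0 : 0 < t := hm.trans_le hmt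
  have h1t : 1 + t ≤ 2 * (t / m) := by
    have h1 : 1 ≤ t / m := (one_le_div hm).2 hmt
    have h2 : t ≤ t / m := by
      rw [le_div_iff₀ hm]; nlinarith
    linarith
  have h1T : 1 + T ≤ 6 * (t / m) * ((1 + D) * (1 + |S|)) := by
    have e3 : 0 ≤ (1 + D) * (1 + |S|) := by positivity
    nlinarith
  have := rpow_le_rpow (by positivity) h1T hN
  rw [mul_rpow (by positivity) (by positivity), mul_rpow (by positivity) (by positivity),
    mul_rpow (by positivity) (by positivity), div_rpow ht0.le hm.le] at this
  rw [rpow_neg ht0.le, rpow_neg hm.le, rpow_neg (by positivity)]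
  have q1 : 0 < t ^ N := by positivity
  have q2 : 0 < m ^ N := by positivity
  have q3 : 0 < (1 + T) ^ N := by positivity
  generalize (1 + T) ^ N = y at *
  generalize t ^ N = x at *
  generalize m ^ N = w at *
  generalize (1 + D) ^ N = d at *
  generalize (1 + |S|) ^ N = e at *
  generalize (6 : ℝ) ^ N = k at *
  rw [inv_eq_one_div, div_le_iff₀ q1]
  have h5 : k * w⁻¹ * y⁻¹ * (d * e) * x = (k * (x / w) * (d * e)) * y⁻¹ := by
    field_simp
  rw [h5, ← div_eq_mul_inv, le_div_iff₀ q3, one_mul]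
  exact this

/-- Planar part of the Carleman kernel away from the diagonal: the cutoff turns the radial
singularity into `m^{γ-1}`, and the Gaussian centred at `ζ` lets the relative speed be compared with
the size of the velocities. -/
lemma planar_bound_cutoff {γ : ℝ} (hγ2 : γ ≤ 1) : ∃ C > (0 : ℝ),
    ∀ m : ℝ, 0 < m → m ≤ 1 → ∀ X : ℝ → ℝ, (∀ t, 0 ≤ X t) → (∀ t, X t ≤ 1) →
      (∀ t, t < m → X t = 0) → ∀ s S T ζ₁ ζ₂ : ℝ, 0 ≤ T →
      T ≤ |S| + |s| + 2 * √(ζ₁ ^ 2 + ζ₂ ^ 2) →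
      ∫⁻ p : ℝ × ℝ, ENNReal.ofReal (√(s ^ 2 + (p.1 ^ 2 + p.2 ^ 2)) ^ (γ - 1) *
          X √(s ^ 2 + (p.1 ^ 2 + p.2 ^ 2)) *
          exp (-((p.1 - ζ₁) ^ 2 + (p.2 - ζ₂) ^ 2) / 2)) ≤
        ENNReal.ofReal (C * m ^ (γ - 1) * (1 + T) ^ (γ - 1) * exp (S ^ 2 / 16)) := by
  set N := 1 - γ with hN
  have hN0 : 0 ≤ N := by linarith
  have hNe : γ - 1 = -N := by rw [hN]; ring
  rw [hNe]
  set C0 := (6 : ℝ) ^ N * exp (N ^ 2 / (4 * (1 / 4))) * exp (N ^ 2 / (4 * (1 / 16))) with hC0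
  have hC0p : 0 < C0 := by positivity
  refine ⟨C0 * (√(π / (1 / 4)) * √(π / (1 / 4))), by positivity, ?_⟩
  intro m hm hm1 X hX0 hX1 hXm s S T ζ₁ ζ₂ hT0 hT
  set K := C0 * m ^ (-N) * (1 + T) ^ (-N) * exp (S ^ 2 / 16) with hK
  have hK0 : 0 ≤ K := by positivity
  have hpt : ∀ p : ℝ × ℝ, ENNReal.ofReal (√(s ^ 2 + (p.1 ^ 2 + p.2 ^ 2)) ^ (-N) *
      X √(s ^ 2 + (p.1 ^ 2 + p.2 ^ 2)) * exp (-((p.1 - ζ₁) ^ 2 + (p.2 - ζ₂) ^ 2) / 2)) ≤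
      ENNReal.ofReal K * (ENNReal.ofReal (exp (-(1 / 4) * (p.1 - ζ₁) ^ 2)) *
        ENNReal.ofReal (exp (-(1 / 4) * (p.2 - ζ₂) ^ 2))) := by
    rintro ⟨a, c⟩
    rw [← ENNReal.ofReal_mul (exp_pos _).le, ← ENNReal.ofReal_mul hK0]
    refine ENNReal.ofReal_le_ofReal ?_
    simp only
    set t := √(s ^ 2 + (a ^ 2 + c ^ 2)) with ht
    rcases lt_or_ge t m with htm | htm
    · rw [hXm t htm]; simp only [mul_zero, zero_mul]; positivity
    set D := √((a - ζ₁) ^ 2 + (c - ζ₂) ^ 2) with hD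
    have hD0 : 0 ≤ D := sqrt_nonneg _
    have hD2 : D ^ 2 = (a - ζ₁) ^ 2 + (c - ζ₂) ^ 2 := sq_sqrt (by positivity)
    have hpow := rpow_neg_planar hN0 hm hm1 htm hT0 hD0 (one_add_le_planar a c hT)
    have hDe := one_add_rpow_le_exp hN0 (show (0 : ℝ) < 1 / 4 by norm_num) hD0
    have hSe := one_add_rpow_le_exp hN0 (show (0 : ℝ) < 1 / 16 by norm_num) (abs_nonneg S)
    rw [sq_abs] at hSe
    calc t ^ (-N) * X t * exp (-((a - ζ₁) ^ 2 + (c - ζ₂) ^ 2) / 2)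
        ≤ (6 ^ N * m ^ (-N) * (1 + T) ^ (-N) *
          ((exp (N ^ 2 / (4 * (1 / 4))) * exp (1 / 4 * D ^ 2)) *
            (exp (N ^ 2 / (4 * (1 / 16))) * exp (1 / 16 * S ^ 2)))) * 1 *
            exp (-((a - ζ₁) ^ 2 + (c - ζ₂) ^ 2) / 2) := by
          gcongr
          · exact hX0 t
          · exact hpow.trans (by gcongr)
          · exact hX1 t
      _ = K * (exp (-(1 / 4) * (a - ζ₁) ^ 2) * exp (-(1 / 4) * (c - ζ₂) ^ 2)) := by
          rw [hK, hC0]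
          have : exp (1 / 4 * D ^ 2) * exp (-((a - ζ₁) ^ 2 + (c - ζ₂) ^ 2) / 2) =
              exp (-(1 / 4) * (a - ζ₁) ^ 2) * exp (-(1 / 4) * (c - ζ₂) ^ 2) := by
            rw [← exp_add, ← exp_add, hD2]; congr 1; ring
          rw [← this, show S ^ 2 / 16 = 1 / 16 * S ^ 2 by ring]
          ring
  refine (lintegral_mono hpt).trans (le_of_eq ?_)
  rw [lintegral_const_mul _ (by fun_prop), Measure.volume_eq_prod,
    lintegral_prod_mul (f := fun a : ℝ => ENNReal.ofReal (exp (-(1 / 4) * (a - ζ₁) ^ 2)))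
      (g := fun c : ℝ => ENNReal.ofReal (exp (-(1 / 4) * (c - ζ₂) ^ 2)))
      (by fun_prop) (by fun_prop), lintegral_gauss (by norm_num), lintegral_gauss (by norm_num),
    ← ENNReal.ofReal_mul (by positivity), ← ENNReal.ofReal_mul hK0]
  congr 1
  rw [hK]; ring

/-- Planar part of the Carleman kernel, uniformly in the cutoff: half of the singularity is kept
as a power of `|s|`, the other half is integrable in the plane because `(1-γ)/2 < 2`. -/
lemma planar_bound_uniform {γ : ℝ} (hγ1 : -3 < γ) (hγ2 : γ ≤ 1) : ∃ C > (0 : ℝ),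
    ∀ X : ℝ → ℝ, (∀ t, 0 ≤ X t) → (∀ t, X t ≤ 1) → ∀ s ζ₁ ζ₂ : ℝ, s ≠ 0 →
      ∫⁻ p : ℝ × ℝ, ENNReal.ofReal (√(s ^ 2 + (p.1 ^ 2 + p.2 ^ 2)) ^ (γ - 1) *
          X √(s ^ 2 + (p.1 ^ 2 + p.2 ^ 2)) *
          exp (-((p.1 - ζ₁) ^ 2 + (p.2 - ζ₂) ^ 2) / 2)) ≤
        ENNReal.ofReal (C * |s| ^ ((γ - 1) / 2)) := by
  -- `|p₁| |p₂| ≤ t²` bounds `t ^ (-2 κ)` by the product `|p₁| ^ (-κ) |p₂| ^ (-κ)`, and `κ < 1`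
  set κ := (1 - γ) / 4 with hκ
  obtain ⟨C, hC, hCb⟩ := lintegral_sing_gauss (κ := κ) (by linarith) (by linarith)
  refine ⟨C * C, by positivity, fun X hX0 hX1 s ζ₁ ζ₂ hs => ?_⟩
  have hs0 : 0 < |s| := abs_pos.2 hs
  have hpt : ∀ p : ℝ × ℝ, p.1 ≠ 0 → p.2 ≠ 0 →
      ENNReal.ofReal (√(s ^ 2 + (p.1 ^ 2 + p.2 ^ 2)) ^ (γ - 1) *
      X √(s ^ 2 + (p.1 ^ 2 + p.2 ^ 2)) * exp (-((p.1 - ζ₁) ^ 2 + (p.2 - ζ₂) ^ 2) / 2)) ≤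
      ENNReal.ofReal (|s| ^ ((γ - 1) / 2)) *
        (ENNReal.ofReal (|p.1| ^ (-κ) * exp (-(1 / 2) * (p.1 - ζ₁) ^ 2)) *
        ENNReal.ofReal (|p.2| ^ (-κ) * exp (-(1 / 2) * (p.2 - ζ₂) ^ 2))) := by
    rintro ⟨a, c⟩ ha hc
    simp only at ha hc
    rw [← ENNReal.ofReal_mul (by positivity), ← ENNReal.ofReal_mul (by positivity)]
    refine ENNReal.ofReal_le_ofReal ?_
    simp only
    set t := √(s ^ 2 + (a ^ 2 + c ^ 2)) with ht
    have ha0 : 0 < |a| := abs_pos.2 ha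
    have hc0 : 0 < |c| := abs_pos.2 hc
    have hst : |s| ≤ t := le_sqrt_of_sq_le (by rw [sq_abs]; nlinarith [sq_nonneg a, sq_nonneg c])
    have ht0 : 0 < t := hs0.trans_le hst
    have hact : |a| * |c| ≤ t ^ 2 := by
      rw [ht, sq_sqrt (by positivity)]
      nlinarith [sq_nonneg (|a| - |c|), sq_abs a, sq_abs c, sq_nonneg s, mul_pos ha0 hc0]
    have h1 : t ^ ((γ - 1) / 2) ≤ |s| ^ ((γ - 1) / 2) :=
      rpow_le_rpow_of_nonpos hs0 hst (by linarith)
    have h2 : t ^ ((γ - 1) / 2) ≤ |a| ^ (-κ) * |c| ^ (-κ) := by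
      rw [← mul_rpow ha0.le hc0.le, show (γ - 1) / 2 = 2 * (-κ) by rw [hκ]; ring, rpow_mul ht0.le]
      exact rpow_le_rpow_of_nonpos (by positivity) (by simpa using hact) (by linarith)
    have h3 : t ^ (γ - 1) = t ^ ((γ - 1) / 2) * t ^ ((γ - 1) / 2) := by
      rw [← rpow_add ht0]; congr 1; ring
    have h4 : exp (-((a - ζ₁) ^ 2 + (c - ζ₂) ^ 2) / 2) =
        exp (-(1 / 2) * (a - ζ₁) ^ 2) * exp (-(1 / 2) * (c - ζ₂) ^ 2) := by
      rw [← exp_add]; congr 1; ring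
    rw [h3, h4]
    calc t ^ ((γ - 1) / 2) * t ^ ((γ - 1) / 2) * X t *
          (exp (-(1 / 2) * (a - ζ₁) ^ 2) * exp (-(1 / 2) * (c - ζ₂) ^ 2))
        ≤ |s| ^ ((γ - 1) / 2) * (|a| ^ (-κ) * |c| ^ (-κ)) * 1 *
          (exp (-(1 / 2) * (a - ζ₁) ^ 2) * exp (-(1 / 2) * (c - ζ₂) ^ 2)) := by
          gcongr
          · exact hX0 t
          · exact hX1 t
      _ = _ := by ring
  have hae : ∀ᵐ p : ℝ × ℝ, p.1 ≠ 0 ∧ p.2 ≠ 0 := by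
    have h0 : ∀ᵐ a : ℝ, a ≠ 0 := Measure.ae_ne volume 0
    exact (Measure.quasiMeasurePreserving_fst.ae h0).and (Measure.quasiMeasurePreserving_snd.ae h0)
  refine (lintegral_mono_ae (hae.mono fun p hp => hpt p hp.1 hp.2)).trans ?_
  rw [lintegral_const_mul _ (by fun_prop), Measure.volume_eq_prod,
    lintegral_prod_mul
      (f := fun a : ℝ => ENNReal.ofReal (|a| ^ (-κ) * exp (-(1 / 2) * (a - ζ₁) ^ 2)))
      (g := fun c : ℝ => ENNReal.ofReal (|c| ^ (-κ) * exp (-(1 / 2) * (c - ζ₂) ^ 2)))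
      (by fun_prop) (by fun_prop), mul_comm (C * C), ENNReal.ofReal_mul (by positivity),
      ENNReal.ofReal_mul hC.le]
  gcongr
  · exact hCb ζ₁
  · exact hCb ζ₂

/-! ### A radial moment estimate -/

/-- Change of variables `R = √(s² + r²)` at fixed `s`. -/
lemma lintegral_radius_le (s : ℝ) (f : ℝ → ℝ≥0∞) :
    ∫⁻ r in Ioi (0 : ℝ), ENNReal.ofReal r * f √(s ^ 2 + r ^ 2) ≤
      ∫⁻ R in Ioi (0 : ℝ), ENNReal.ofReal R * ((Ioi |s|).indicator f R) := by
  set g : ℝ → ℝ := fun r => √(s ^ 2 + r ^ 2) with hg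
  have hpos : ∀ r ∈ Ioi (0 : ℝ), 0 < s ^ 2 + r ^ 2 := fun r hr => by
    have : (0 : ℝ) < r := hr
    positivity
  have hder : ∀ r ∈ Ioi (0 : ℝ), HasDerivWithinAt g (r / √(s ^ 2 + r ^ 2)) (Ioi 0) r := by
    intro r hr
    have h1 : HasDerivAt (fun r : ℝ => s ^ 2 + r ^ 2) (2 * r) r := by
      simpa using (hasDerivAt_pow 2 r).const_add (s ^ 2)
    have h2 := h1.sqrt (hpos r hr).ne'
    refine (h2.congr_deriv ?_).hasDerivWithinAt
    exact mul_div_mul_left _ _ two_ne_zero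
  have hinj : InjOn g (Ioi 0) := by
    intro r hr r' hr' h
    have hr0 : (0 : ℝ) < r := hr
    have hr0' : (0 : ℝ) < r' := hr'
    have := (sqrt_inj (hpos r hr).le (hpos r' hr').le).1 h
    nlinarith
  have himg : g '' Ioi 0 ⊆ Ioi |s| := by
    rintro _ ⟨r, hr, rfl⟩
    have hr0 : (0 : ℝ) < r := hr
    refine lt_sqrt_of_sq_lt ?_
    rw [sq_abs]; nlinarith
  have hcv := lintegral_image_eq_lintegral_abs_deriv_mul measurableSet_Ioi hder hinj
    (fun R => ENNReal.ofReal R * f R)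
  calc ∫⁻ r in Ioi (0 : ℝ), ENNReal.ofReal r * f √(s ^ 2 + r ^ 2)
      = ∫⁻ r in Ioi (0 : ℝ), ENNReal.ofReal |r / √(s ^ 2 + r ^ 2)| *
          (ENNReal.ofReal (g r) * f (g r)) := by
        refine setLIntegral_congr_fun measurableSet_Ioi fun r hr => ?_
        have hr0 : (0 : ℝ) < r := hr
        have hq : 0 < √(s ^ 2 + r ^ 2) := sqrt_pos.2 (hpos r hr)
        simp only [hg]
        rw [← mul_assoc, ← ENNReal.ofReal_mul (abs_nonneg _), abs_of_pos (by positivity),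
          div_mul_cancel₀ _ hq.ne']
    _ = ∫⁻ R in g '' Ioi 0, ENNReal.ofReal R * f R := hcv.symm
    _ ≤ ∫⁻ R in Ioi |s|, ENNReal.ofReal R * f R := lintegral_mono_set himg
    _ ≤ ∫⁻ R in Ioi (0 : ℝ), ENNReal.ofReal R * ((Ioi |s|).indicator f R) := by
        rw [← lintegral_indicator measurableSet_Ioi, ← lintegral_indicator measurableSet_Ioi]
        refine lintegral_mono fun R => ?_
        by_cases hR : R ∈ Ioi |s|
        · have : R ∈ Ioi (0 : ℝ) := (abs_nonneg s).trans_lt hR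
          rw [indicator_of_mem hR, indicator_of_mem this, indicator_of_mem hR]
        · rw [indicator_of_notMem hR]; exact zero_le

/-- Averaging over the sphere of radius `R`: the Gaussian confines `s` to a set of length
`O(R / V)`. -/
lemma lintegral_slab {ε : ℝ} (hε : 0 < ε) : ∃ C > (0 : ℝ), ∀ V R : ℝ, 0 ≤ V → 0 < R →
    ∫⁻ s : ℝ, (Ioo (-R) R).indicator
      (fun s => ENNReal.ofReal (exp (-ε * (2 * V * s / R + R) ^ 2))) s ≤
      ENNReal.ofReal (C * R / (1 + V)) := by
  refine ⟨4 + √(π / ε), by positivity, fun V R hV hR => ?_⟩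
  rcases le_or_gt V 1 with h1 | h1
  · calc _ ≤ ∫⁻ s : ℝ, (Ioo (-R) R).indicator (fun _ => (1 : ℝ≥0∞)) s := by
          refine lintegral_mono fun s => indicator_le_indicator ?_
          rw [← ENNReal.ofReal_one]
          refine ENNReal.ofReal_le_ofReal (exp_le_one_iff.2 ?_)
          nlinarith [sq_nonneg (2 * V * s / R + R)]
      _ = ENNReal.ofReal (2 * R) := by
          rw [lintegral_indicator measurableSet_Ioo]
          rw [setLIntegral_const, one_mul, Real.volume_Ioo]
          congr 1; ring
      _ ≤ _ := by
          refine ENNReal.ofReal_le_ofReal ?_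
          rw [le_div_iff₀ (by positivity)]
          nlinarith [mul_nonneg (sqrt_nonneg (π / ε)) hR.le]
  · have hV0 : 0 < V := by linarith
    set k := ε * (2 * V / R) ^ 2 with hk
    have hk0 : 0 < k := by positivity
    calc _ ≤ ∫⁻ s : ℝ, ENNReal.ofReal (exp (-k * (s - (-(R ^ 2 / (2 * V)))) ^ 2)) := by
          refine lintegral_mono fun s => (indicator_le_self' (by simp) s).trans (le_of_eq ?_)
          simp only
          congr 2
          rw [hk]; field_simp; ring
      _ = ENNReal.ofReal √(π / k) := lintegral_gauss hk0 _
      _ ≤ _ := by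
          refine ENNReal.ofReal_le_ofReal ?_
          have : √(π / k) = √(π / ε) * (R / (2 * V)) := by
            rw [hk, show π / (ε * (2 * V / R) ^ 2) = π / ε * (R / (2 * V)) ^ 2 by field_simp,
              sqrt_mul (by positivity), sqrt_sq (by positivity)]
          rw [this, ← mul_div_assoc, div_le_div_iff₀ (by positivity) (by positivity)]
          have h3 : 0 ≤ √(π / ε) * R := by positivity
          nlinarith [mul_pos hR hV0, mul_nonneg h3 hV0.le]

/-- The basic moment estimate: one power of `1 + |v|` is gained because the Gaussian in
`2 v·x/|x| + |x|` confines the angle between `x` and `v`. -/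
lemma radial_estimate {a ε : ℝ} (ha : a < 3) (hε : 0 < ε) : ∃ C > (0 : ℝ), ∀ v : V3,
    ∫⁻ x : V3, ENNReal.ofReal (‖x‖ ^ (-a) *
      exp (-ε * (‖x‖ ^ 2 + (2 * ⟪v, x⟫ / ‖x‖ + ‖x‖) ^ 2))) ≤
      ENNReal.ofReal (C * (1 + ‖v‖)⁻¹) := by
  obtain ⟨C, hC, hslab⟩ := lintegral_slab hε
  have hint := integrableOn_rpow_mul_exp_neg_mul_sq hε (s := 2 - a) (by linarith)
  set I := ∫ R in Ioi (0 : ℝ), R ^ (2 - a) * exp (-ε * R ^ 2) with hI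
  have hI0 : 0 ≤ I := setIntegral_nonneg measurableSet_Ioi fun R hR => by
    have : (0 : ℝ) < R := hR
    positivity
  refine ⟨2 * π * (C * (I + 1)), by positivity, fun v => ?_⟩
  set V := ‖v‖ with hV
  have hV0 : 0 ≤ V := norm_nonneg v
  obtain ⟨e, he, hve⟩ : ∃ e : V3, ‖e‖ = 1 ∧ v = V • e := by
    rcases eq_or_ne v 0 with rfl | hv
    · obtain ⟨e, he⟩ := exists_norm_eq V3 (zero_le_one (α := ℝ))
      exact ⟨e, he, by simp [hV]⟩
    · have : 0 < V := norm_pos_iff.2 hv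
      refine ⟨V⁻¹ • v, ?_, ?_⟩
      · rw [norm_smul, norm_inv, norm_norm]; exact inv_mul_cancel₀ this.ne'
      · rw [smul_smul, mul_inv_cancel₀ this.ne', one_smul]
  obtain ⟨e1, e2, h1, h2, h01, h02, h12, -, hframe⟩ := exists_frame e he
  have he1e : ⟪e1, e⟫ = 0 := by rw [real_inner_comm]; exact h01
  have he2e : ⟪e2, e⟫ = 0 := by rw [real_inner_comm]; exact h02
  have h21 : ⟪e2, e1⟫ = 0 := by rw [real_inner_comm]; exact h12
  let f : ℝ → ℝ → ℝ≥0∞ := fun s R => ENNReal.ofReal (R ^ (-a) * exp (-ε * R ^ 2)) *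
    ENNReal.ofReal (exp (-ε * (2 * V * s / R + R) ^ 2))
  have hfm : Measurable fun p : ℝ × ℝ => f p.1 p.2 := by fun_prop
  have step1 : ∫⁻ x : V3, ENNReal.ofReal (‖x‖ ^ (-a) *
      exp (-ε * (‖x‖ ^ 2 + (2 * ⟪v, x⟫ / ‖x‖ + ‖x‖) ^ 2))) =
      ∫⁻ s : ℝ, ENNReal.ofReal (2 * π) *
        ∫⁻ r in Ioi (0 : ℝ), ENNReal.ofReal r * f s √(s ^ 2 + r ^ 2) := by
    rw [hframe _ (by fun_prop)]
    refine lintegral_congr fun s => ?_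
    rw [lintegral_plane _ (by fun_prop), ← lintegral_const_mul _ (by fun_prop)]
    refine setLIntegral_congr_fun measurableSet_Ioi fun r hr => ?_
    simp only
    have : ∀ θ : ℝ, ENNReal.ofReal (‖s • e + (r * cos θ) • e1 + (r * sin θ) • e2‖ ^ (-a) *
        exp (-ε * (‖s • e + (r * cos θ) • e1 + (r * sin θ) • e2‖ ^ 2 +
          (2 * ⟪v, s • e + (r * cos θ) • e1 + (r * sin θ) • e2⟫ /
            ‖s • e + (r * cos θ) • e1 + (r * sin θ) • e2‖ +
            ‖s • e + (r * cos θ) • e1 + (r * sin θ) • e2‖) ^ 2))) = f s √(s ^ 2 + r ^ 2) := by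
      intro θ
      set x : V3 := s • e + (r * cos θ) • e1 + (r * sin θ) • e2 with hx
      have hvx : ⟪v, x⟫ = V * s := by
        rw [hve, hx]; simp [inner_add_right, inner_smul_left, inner_smul_right, h01, h02, he]
        ring
      have hxn2 : ‖x‖ ^ 2 = s ^ 2 + r ^ 2 := by
        rw [← real_inner_self_eq_norm_sq, hx]
        simp only [inner_add_right, inner_add_left, inner_smul_left, inner_smul_right, h01, h02,
          h12, h21, he1e, he2e, real_inner_self_eq_norm_sq, he, h1, h2]
        simp
        linear_combination (r ^ 2) * (sin_sq_add_cos_sq θ)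
      have hxn : ‖x‖ = √(s ^ 2 + r ^ 2) := by
        rw [← hxn2, Real.sqrt_sq (norm_nonneg _)]
      rw [hvx, hxn]
      simp only [f]
      rw [← ENNReal.ofReal_mul (by positivity), mul_assoc, ← exp_add]
      congr 3
      ring_nf
    simp_rw [this]
    rw [setLIntegral_const, Real.volume_Ioo]
    rw [show π - -π = 2 * π by ring]
    ring
  rw [step1, lintegral_const_mul' _ _ ENNReal.ofReal_ne_top]
  have step2 : ∫⁻ s : ℝ, ∫⁻ r in Ioi (0 : ℝ), ENNReal.ofReal r * f s √(s ^ 2 + r ^ 2) ≤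
      ∫⁻ R in Ioi (0 : ℝ), ENNReal.ofReal (C * (1 + V)⁻¹) *
        ENNReal.ofReal (R ^ (2 - a) * exp (-ε * R ^ 2)) := by
    calc _ ≤ ∫⁻ s : ℝ, ∫⁻ R in Ioi (0 : ℝ), ENNReal.ofReal R * ((Ioi |s|).indicator (f s) R) :=
          lintegral_mono fun s => lintegral_radius_le s (f s)
      _ = ∫⁻ R in Ioi (0 : ℝ), ∫⁻ s : ℝ, ENNReal.ofReal R * ((Ioi |s|).indicator (f s) R) := by
          rw [lintegral_lintegral_swap]
          refine Measurable.aemeasurable ?_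
          have hset : MeasurableSet {p : ℝ × ℝ | |p.1| < p.2} :=
            measurableSet_lt (by fun_prop) (by fun_prop)
          have : (fun p : ℝ × ℝ => (Ioi |p.1|).indicator (f p.1) p.2) =
              {p : ℝ × ℝ | |p.1| < p.2}.indicator (fun p => f p.1 p.2) := by
            ext p
            simp only [indicator, mem_Ioi, mem_ofPred_eq]
          have hm : Measurable fun p : ℝ × ℝ => (Ioi |p.1|).indicator (f p.1) p.2 := by
            rw [this]; exact hfm.indicator hset
          exact Measurable.mul (by fun_prop) hm
      _ ≤ _ := by
          refine setLIntegral_mono (by fun_prop) fun R hR => ?_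
          have hR0 : (0 : ℝ) < R := hR
          have : ∀ s : ℝ, ENNReal.ofReal R * ((Ioi |s|).indicator (f s) R) =
              ENNReal.ofReal (R * (R ^ (-a) * exp (-ε * R ^ 2))) * (Ioo (-R) R).indicator
                (fun s => ENNReal.ofReal (exp (-ε * (2 * V * s / R + R) ^ 2))) s := by
            intro s
            by_cases hs : |s| < R
            · rw [indicator_of_mem (show R ∈ Ioi |s| from hs),
                indicator_of_mem (show s ∈ Ioo (-R) R from abs_lt.1 hs)]
              simp only [f]
              rw [← mul_assoc, ← ENNReal.ofReal_mul hR0.le]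
            · rw [indicator_of_notMem (show R ∉ Ioi |s| from hs),
                indicator_of_notMem (show s ∉ Ioo (-R) R from fun h => hs (abs_lt.2 h)),
                mul_zero, mul_zero]
          simp_rw [this]
          rw [lintegral_const_mul' _ _ ENNReal.ofReal_ne_top]
          calc _ ≤ ENNReal.ofReal (R * (R ^ (-a) * exp (-ε * R ^ 2))) *
                  ENNReal.ofReal (C * R / (1 + V)) := by
                gcongr
                exact hslab V R hV0 hR0
            _ = _ := by
                rw [← ENNReal.ofReal_mul (by positivity), ← ENNReal.ofReal_mul (by positivity)]
                congr 1
                rw [show 2 - a = 1 + (1 + -a) by ring, rpow_add hR0, rpow_add hR0, rpow_one]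
                ring
  calc _ ≤ ENNReal.ofReal (2 * π) * ∫⁻ R in Ioi (0 : ℝ), ENNReal.ofReal (C * (1 + V)⁻¹) *
        ENNReal.ofReal (R ^ (2 - a) * exp (-ε * R ^ 2)) := by gcongr
    _ = ENNReal.ofReal (2 * π) * (ENNReal.ofReal (C * (1 + V)⁻¹) * ENNReal.ofReal I) := by
        rw [lintegral_const_mul' _ _ ENNReal.ofReal_ne_top, hI,
          ofReal_integral_eq_lintegral_ofReal hint]
        filter_upwards [ae_restrict_mem measurableSet_Ioi] with R hR
        have : (0 : ℝ) < R := hR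
        positivity
    _ ≤ _ := by
        rw [← ENNReal.ofReal_mul (by positivity), ← ENNReal.ofReal_mul (by positivity)]
        refine ENNReal.ofReal_le_ofReal ?_
        have : 0 < C * (1 + V)⁻¹ := by positivity
        nlinarith [pi_pos, mul_pos pi_pos this]

/-! ### Carleman's representation of the gain terms -/

/-- The Gaussian profile of the gain kernels. -/
def profile (v η : V3) : ℝ :=
  exp (-‖v - η‖ ^ 2 / 10) * exp (-(‖v‖ ^ 2 - ‖η‖ ^ 2) ^ 2 / (16 * ‖v - η‖ ^ 2))

lemma profile_pos (v η : V3) : 0 < profile v η := by unfold profile; positivity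

lemma measurable_gm : Measurable gm := by unfold gm; fun_prop

lemma gm_pos (v : V3) : 0 < gm v := by unfold gm; positivity

lemma sqrt_gm_mul (u w : V3) :
    √(gm u * gm w) = (2 * π)⁻¹ * exp (-(‖u‖ ^ 2 + ‖w‖ ^ 2) / 4) := by
  have : gm u * gm w = ((2 * π)⁻¹ * exp (-(‖u‖ ^ 2 + ‖w‖ ^ 2) / 4)) ^ 2 := by
    unfold gm
    rw [mul_pow, ← exp_nat_mul, mul_mul_mul_comm, ← exp_add, ← sq]
    congr 2; push_cast; ring
  rw [this, sqrt_sq (by positivity)]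

/-- Carleman's representation: the integral over `(u, ω)` is rewritten as an integral over the
lines `η = v - s ω` and over the planes orthogonal to them, so that a pointwise bound on the
planar integral bounds the density of the pushforward under `(u, ω) ↦ v'`. -/
lemma carleman_le {γ : ℝ} (X : ℝ → ℝ) (hXm : Measurable X) (v : V3)
    (D : V3 → ℝ≥0∞) (hD : Measurable D)
    (hJ : ∀ (ω : V3) (s ζ₁ ζ₂ : ℝ), ‖ω‖ = 1 → s ≠ 0 → ‖v‖ ^ 2 = ⟪ω, v⟫ ^ 2 + ζ₁ ^ 2 + ζ₂ ^ 2 →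
      ENNReal.ofReal (|s| * ((2 * π)⁻¹ * exp (-((2 * ⟪ω, v⟫ - s) ^ 2 + s ^ 2) / 8))) *
        ∫⁻ p : ℝ × ℝ, ENNReal.ofReal (√(s ^ 2 + (p.1 ^ 2 + p.2 ^ 2)) ^ (γ - 1) *
          X √(s ^ 2 + (p.1 ^ 2 + p.2 ^ 2)) * exp (-((p.1 - ζ₁) ^ 2 + (p.2 - ζ₂) ^ 2) / 2)) ≤
      ENNReal.ofReal (s ^ 2) * D (v - s • ω))
    (ψ : V3 → ℝ≥0∞) (hψ : Measurable ψ) :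
    ∫⁻ u : V3, ∫⁻ ω : Sph, ENNReal.ofReal (‖v - u‖ ^ (γ - 1) * |⟪v - u, (ω : V3)⟫| *
        X ‖v - u‖ * √(gm u * gm (upost v u ω))) * ψ (vpost v u ω) ∂sphM ≤
      2 * ∫⁻ η : V3, D η * ψ η := by
  have := measurable_gm
  have hfm : Measurable fun p : V3 × Sph =>
      ENNReal.ofReal (‖v - p.1‖ ^ (γ - 1) * |⟪v - p.1, (p.2 : V3)⟫| *
        X ‖v - p.1‖ * √(gm p.1 * gm (upost v p.1 p.2))) * ψ (vpost v p.1 p.2) := by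
    unfold upost vpost
    fun_prop
  have : SFinite sphM := by unfold sphM; infer_instance
  rw [lintegral_lintegral_swap hfm.aemeasurable]
  calc _ ≤ ∫⁻ ω : Sph, ∫⁻ s : ℝ, ENNReal.ofReal (s ^ 2) *
        (D (v - s • (ω : V3)) * ψ (v - s • (ω : V3))) ∂volume ∂sphM := by
        refine lintegral_mono fun ω => ?_
        have hω : ‖(ω : V3)‖ = 1 := norm_eq_of_mem_sphere ω
        have hfω : Measurable fun x : V3 => ENNReal.ofReal (‖v - (v - x)‖ ^ (γ - 1) *
            |⟪v - (v - x), (ω : V3)⟫| * X ‖v - (v - x)‖ * √(gm (v - x) * gm (upost v (v - x) ω))) *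
            ψ (vpost v (v - x) ω) := by
          unfold upost vpost
          fun_prop
        obtain ⟨e1, e2, h1, h2, h01, h02, h12, hdec, hframe⟩ := exists_frame (ω : V3) hω
        have he1e : ⟪e1, (ω : V3)⟫ = 0 := by rw [real_inner_comm]; exact h01
        have he2e : ⟪e2, (ω : V3)⟫ = 0 := by rw [real_inner_comm]; exact h02
        have h21 : ⟪e2, e1⟫ = 0 := by rw [real_inner_comm]; exact h12
        rw [← lintegral_sub_left_eq_self _ v, hframe _ hfω]
        have hnorm : ∀ a b c : ℝ, ‖a • (ω : V3) + b • e1 + c • e2‖ ^ 2 = a ^ 2 + (b ^ 2 + c ^ 2) := by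
          intro a b c
          rw [← real_inner_self_eq_norm_sq]
          simp only [inner_add_right, inner_add_left, inner_smul_left, inner_smul_right, h01, h02,
            h12, h21, he1e, he2e, real_inner_self_eq_norm_sq, hω, h1, h2]
          simp; ring
        set ζ₁ := ⟪e1, v⟫ with hζ₁
        set ζ₂ := ⟪e2, v⟫ with hζ₂
        set v0 := ⟪(ω : V3), v⟫ with hv0
        have hvn : ‖v‖ ^ 2 = v0 ^ 2 + ζ₁ ^ 2 + ζ₂ ^ 2 := by
          conv_lhs => rw [hdec v]
          rw [hnorm]; ring
        refine lintegral_mono_ae ?_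
        filter_upwards [compl_mem_ae_iff.2 (measure_singleton (0 : ℝ))] with s hs
        have hs0 : s ≠ 0 := hs
        calc _ = ENNReal.ofReal (|s| * ((2 * π)⁻¹ * exp (-((2 * v0 - s) ^ 2 + s ^ 2) / 8))) *
              (∫⁻ p : ℝ × ℝ, ENNReal.ofReal (√(s ^ 2 + (p.1 ^ 2 + p.2 ^ 2)) ^ (γ - 1) *
                X √(s ^ 2 + (p.1 ^ 2 + p.2 ^ 2)) *
                exp (-((p.1 - ζ₁) ^ 2 + (p.2 - ζ₂) ^ 2) / 2))) * ψ (v - s • (ω : V3)) := by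
              rw [← lintegral_const_mul _ (by fun_prop), ← lintegral_mul_const _ (by fun_prop)]
              refine lintegral_congr fun p => ?_
              set z : V3 := s • (ω : V3) + p.1 • e1 + p.2 • e2 with hz
              have hzω : ⟪z, (ω : V3)⟫ = s := by
                rw [hz]; simp [inner_add_left, inner_smul_left, he1e, he2e]
              have hzn : ‖z‖ = √(s ^ 2 + (p.1 ^ 2 + p.2 ^ 2)) := by
                rw [← hnorm, Real.sqrt_sq (norm_nonneg _)]
              have hvz : v - (v - z) = z := by abel
              have hu : ‖v - z‖ ^ 2 = (v0 - s) ^ 2 + ((ζ₁ - p.1) ^ 2 + (ζ₂ - p.2) ^ 2) := by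
                rw [← hnorm]
                conv_lhs => rw [hdec v, hz]
                congr 2
                simp only [sub_smul]; abel
              have hu' : ‖v - z + s • (ω : V3)‖ ^ 2 =
                  v0 ^ 2 + ((ζ₁ - p.1) ^ 2 + (ζ₂ - p.2) ^ 2) := by
                rw [← hnorm]
                conv_lhs => rw [hdec v, hz]
                congr 2
                simp only [sub_smul]; abel
              simp only [upost, vpost, hvz, hzω, sqrt_gm_mul, hu, hu', hzn]
              rw [← ENNReal.ofReal_mul (by positivity)]
              congr 2
              have : exp (-((v0 - s) ^ 2 + ((ζ₁ - p.1) ^ 2 + (ζ₂ - p.2) ^ 2) +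
                  (v0 ^ 2 + ((ζ₁ - p.1) ^ 2 + (ζ₂ - p.2) ^ 2))) / 4) =
                  exp (-((2 * v0 - s) ^ 2 + s ^ 2) / 8) *
                    exp (-((p.1 - ζ₁) ^ 2 + (p.2 - ζ₂) ^ 2) / 2) := by
                rw [← exp_add]; congr 1; ring
              rw [this]; ring
          _ ≤ ENNReal.ofReal (s ^ 2) * D (v - s • (ω : V3)) * ψ (v - s • (ω : V3)) := by
              gcongr ?_ * _
              exact hJ ω s ζ₁ ζ₂ hω hs0 hvn
          _ = _ := mul_assoc _ _ _
    _ = 2 * ∫⁻ x : V3, D (v - x) * ψ (v - x) :=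
        lintegral_lines (fun x => D (v - x) * ψ (v - x)) (by fun_prop)
    _ = _ := by rw [lintegral_sub_left_eq_self (fun η => D η * ψ η) v]

/-- Upper bound for the gain kernels, with `A` the constant of the cutoff estimate and `B` that of
the estimate uniform in the cutoff. -/
def gainBd (γ m A B : ℝ) (v η : V3) : ℝ :=
  min (A * m ^ (γ - 1) * ‖v - η‖⁻¹ * (1 + ‖v‖ + ‖η‖) ^ (-(1 - γ)) * profile v η)
    (B * ‖v - η‖ ^ (-(3 - γ) / 2) * profile v η)

lemma measurable_gainBd (γ m A B : ℝ) (v : V3) : Measurable (gainBd γ m A B v) := by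
  unfold gainBd profile; fun_prop

/-- Carleman's representation combined with the planar bounds. The Gaussian in `2 v·ω - s` that
comes from the Maxwellians has some room compared with the one of `profile`, and this room absorbs
the exponential growth in `planar_bound_cutoff`. -/
lemma gain_bound {γ : ℝ} (hγ1 : -3 < γ) (hγ2 : γ ≤ 1) : ∃ A > (0 : ℝ), ∃ B > (0 : ℝ),
    ∀ m, 0 < m → m ≤ 1 → ∀ X : ℝ → ℝ, Measurable X → (∀ t, 0 ≤ X t) → (∀ t, X t ≤ 1) →
    (∀ t, t < m → X t = 0) → ∀ v (ψ : V3 → ℝ≥0∞), Measurable ψ →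
    ∫⁻ u : V3, ∫⁻ ω : Sph, ENNReal.ofReal (‖v - u‖ ^ (γ - 1) * |⟪v - u, (ω : V3)⟫| *
        X ‖v - u‖ * √(gm u * gm (upost v u ω))) * ψ (vpost v u ω) ∂sphM ≤
      2 * ∫⁻ η : V3, ENNReal.ofReal (gainBd γ m A B v η) * ψ η := by
  obtain ⟨A, hA, hcut⟩ := planar_bound_cutoff hγ2
  obtain ⟨B, hB, huni⟩ := planar_bound_uniform hγ1 hγ2
  refine ⟨A, hA, B, hB, fun m hm hm1 X hXm hX0 hX1 hXz v ψ hψ => ?_⟩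
  refine carleman_le X hXm v _ (measurable_gainBd γ m A B v).ennreal_ofReal ?_ ψ hψ
  intro ω s ζ₁ ζ₂ hω hs hvn
  set v0 := ⟪ω, v⟫ with hv0
  have hvω : ⟪v, ω⟫ = v0 := real_inner_comm _ _
  have hs' : 0 < |s| := abs_pos.2 hs
  have hρ : ‖v - (v - s • ω)‖ = |s| := by
    rw [sub_sub_cancel, norm_smul, hω, mul_one, Real.norm_eq_abs]
  have hη : ‖v - s • ω‖ ^ 2 = (v0 - s) ^ 2 + ζ₁ ^ 2 + ζ₂ ^ 2 := by
    rw [norm_sub_sq_real, inner_smul_right, hvω, norm_smul, hω, hvn, Real.norm_eq_abs, mul_one,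
      sq_abs]
    ring
  have hdiff : ‖v‖ ^ 2 - ‖v - s • ω‖ ^ 2 = s * (2 * v0 - s) := by rw [hη, hvn]; ring
  have hprof : profile v (v - s • ω) =
      exp (-s ^ 2 / 10) * exp (-(2 * v0 - s) ^ 2 / 16) := by
    unfold profile
    rw [hρ, hdiff, sq_abs]
    congr 2
    field_simp
  set Z := √(ζ₁ ^ 2 + ζ₂ ^ 2) with hZ
  have hZ0 : 0 ≤ Z := sqrt_nonneg _
  have hZ2 : Z ^ 2 = ζ₁ ^ 2 + ζ₂ ^ 2 := sq_sqrt (by positivity)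
  have hv1 : ‖v‖ ≤ |v0| + Z := by
    refine abs_le_of_sq_le_sq' ?_ (by positivity) |>.2
    nlinarith [sq_abs v0, mul_nonneg (abs_nonneg v0) hZ0]
  have hη1 : ‖v - s • ω‖ ≤ |v0 - s| + Z := by
    refine abs_le_of_sq_le_sq' ?_ (by positivity) |>.2
    nlinarith [sq_abs (v0 - s), mul_nonneg (abs_nonneg (v0 - s)) hZ0]
  have hT : ‖v‖ + ‖v - s • ω‖ ≤ |2 * v0 - s| + |s| + 2 * Z := by
    have : |v0| + |v0 - s| ≤ |2 * v0 - s| + |s| := by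
      rcases abs_cases v0 with h | h <;> rcases abs_cases (v0 - s) with h' | h' <;>
        rcases abs_cases (2 * v0 - s) with h'' | h'' <;> rcases abs_cases s with h3 | h3 <;>
        linarith
    linarith
  have hπ : (2 * π)⁻¹ ≤ 1 := inv_le_one_of_one_le₀ (by linarith [pi_gt_three])
  set S := 2 * v0 - s with hS
  have hexp : exp (-(S ^ 2 + s ^ 2) / 8) * exp (S ^ 2 / 16) ≤
      exp (-s ^ 2 / 10) * exp (-S ^ 2 / 16) := by
    rw [← exp_add, ← exp_add]
    exact exp_le_exp.2 (by nlinarith [sq_nonneg s])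
  have hexp' : exp (-(S ^ 2 + s ^ 2) / 8) ≤ exp (-s ^ 2 / 10) * exp (-S ^ 2 / 16) := by
    rw [← exp_add]
    exact exp_le_exp.2 (by nlinarith [sq_nonneg s, sq_nonneg S])
  have hsplit : ENNReal.ofReal (gainBd γ m A B v (v - s • ω)) =
      min (ENNReal.ofReal (A * m ^ (γ - 1) * |s|⁻¹ * (1 + ‖v‖ + ‖v - s • ω‖) ^ (-(1 - γ)) *
        (exp (-s ^ 2 / 10) * exp (-S ^ 2 / 16))))
      (ENNReal.ofReal (B * |s| ^ (-(3 - γ) / 2) * (exp (-s ^ 2 / 10) * exp (-S ^ 2 / 16)))) := by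
    unfold gainBd
    rw [hprof, hρ, ENNReal.ofReal_min]
  rw [hsplit, mul_min, le_min_iff]
  constructor
  · have h := hcut m hm hm1 X hX0 hX1 hXz s S (‖v‖ + ‖v - s • ω‖) ζ₁ ζ₂ (by positivity) hT
    refine (mul_le_mul_right h _).trans ?_
    rw [← ENNReal.ofReal_mul (by positivity), ← ENNReal.ofReal_mul (by positivity)]
    refine ENNReal.ofReal_le_ofReal ?_
    rw [show -(1 - γ) = γ - 1 by ring, ← add_assoc]
    set Q := A * m ^ (γ - 1) * (1 + ‖v‖ + ‖v - s • ω‖) ^ (γ - 1) with hQ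
    have hQ0 : 0 ≤ Q := by positivity
    calc _ = |s| * Q * ((2 * π)⁻¹ * (exp (-(S ^ 2 + s ^ 2) / 8) * exp (S ^ 2 / 16))) := by
          rw [hQ]; ring
      _ ≤ |s| * Q * (1 * (exp (-s ^ 2 / 10) * exp (-S ^ 2 / 16))) := by gcongr
      _ = _ := by
          rw [hQ, ← sq_abs s]; field_simp
  · have h := huni X hX0 hX1 s ζ₁ ζ₂ hs
    refine (mul_le_mul_right h _).trans ?_
    rw [← ENNReal.ofReal_mul (by positivity), ← ENNReal.ofReal_mul (by positivity)]
    refine ENNReal.ofReal_le_ofReal ?_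
    calc _ = (2 * π)⁻¹ * (B * (|s| * |s| ^ ((γ - 1) / 2))) * exp (-(S ^ 2 + s ^ 2) / 8) := by ring
      _ ≤ 1 * (B * (|s| * |s| ^ ((γ - 1) / 2))) *
          (exp (-s ^ 2 / 10) * exp (-S ^ 2 / 16)) := by gcongr
      _ = _ := by
          have : s ^ 2 * |s| ^ (-(3 - γ) / 2) = |s| * |s| ^ ((γ - 1) / 2) := by
            rw [← sq_abs, ← rpow_natCast, ← rpow_add hs']
            nth_rw 2 [← rpow_one |s|]
            rw [← rpow_add hs']
            congr 1; push_cast; ring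
          rw [← this]; ring

/-- The gain term evaluated at `u'` equals the one evaluated at `v'`, by the substitution of
`sphere_swap` at fixed `u`; hence the same kernel dominates both. -/
lemma gain_bound_swap {γ : ℝ} (X : ℝ → ℝ) (v : V3) (ψ : V3 → ℝ≥0∞)
    (hψ : Measurable ψ) :
    ∫⁻ u : V3, ∫⁻ ω : Sph, ENNReal.ofReal (‖v - u‖ ^ (γ - 1) * |⟪v - u, (ω : V3)⟫| *
        X ‖v - u‖ * √(gm u * gm (vpost v u ω))) * ψ (upost v u ω) ∂sphM =
    ∫⁻ u : V3, ∫⁻ ω : Sph, ENNReal.ofReal (‖v - u‖ ^ (γ - 1) * |⟪v - u, (ω : V3)⟫| *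
        X ‖v - u‖ * √(gm u * gm (upost v u ω))) * ψ (vpost v u ω) ∂sphM := by
  refine lintegral_congr fun u => ?_
  have := measurable_gm
  have hsw := sphere_swap (v - u) (fun p => ENNReal.ofReal (‖v - u‖ ^ (γ - 1) *
        X ‖v - u‖ * √(gm u * gm (v - p.1))) * ψ (v - p.2)) (by fun_prop)
  have hu : ∀ ω : Sph, v - (v - u - ⟪v - u, (ω : V3)⟫ • (ω : V3)) = upost v u ω := fun ω => by
    unfold upost; abel
  have hv : ∀ ω : Sph, v - ⟪v - u, (ω : V3)⟫ • (ω : V3) = vpost v u ω := fun ω => rfl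
  simp only [hu, hv, ← mul_assoc, ← ENNReal.ofReal_mul (abs_nonneg _)] at hsw
  have hc : ∀ a b c d : ℝ, a * b * c * d = b * a * c * d := fun a b c d => by ring
  simp only [hc (‖v - u‖ ^ (γ - 1))]
  exact hsw.symm

/-! ### Existence of kernels, gain and loss terms -/

instance isFiniteMeasure_sphM : IsFiniteMeasure sphM := by unfold sphM; infer_instance

/-- A finite positive measure on `V3` given as the image under `T` of a weight `W`, and dominated
by the density `D`, is the integration against a kernel lying between `0` and `D` everywhere: the
Radon-Nikodym derivative, truncated at `D`. -/
lemma exists_kernel (W : V3 × Sph → ℝ) (hWm : Measurable W) (hW0 : ∀ p, 0 ≤ W p)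
    (hWi : Integrable W (volume.prod sphM)) (T : V3 × Sph → V3) (hT : Measurable T)
    (D : V3 → ℝ) (hDm : Measurable D) (hD0 : ∀ η, 0 ≤ D η)
    (hle : ∀ ψ : V3 → ℝ≥0∞, Measurable ψ →
      ∫⁻ p, ENNReal.ofReal (W p) * ψ (T p) ∂(volume.prod sphM) ≤
        ∫⁻ η, ENNReal.ofReal (D η) * ψ η) :
    ∃ k : V3 → ℝ, (∀ η, 0 ≤ k η ∧ k η ≤ D η) ∧
      ∀ g : V3 → ℝ, Measurable g → (∃ M : ℝ, ∀ η, |g η| ≤ M) →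
        Integrable (fun η => k η * g η) ∧
          ∫ p, W p * g (T p) ∂(volume.prod sphM) = ∫ η, k η * g η := by
  set P : Measure (V3 × Sph) := volume.prod sphM with hP
  set μ : Measure (V3 × Sph) := P.withDensity fun p => ENNReal.ofReal (W p) with hμ
  have hμf : IsFiniteMeasure μ :=
    isFiniteMeasure_withDensity_ofReal hWi.2
  set ν : Measure V3 := μ.map T with hν
  have hνf : IsFiniteMeasure ν := by rw [hν]; infer_instance
  have hlν : ∀ ψ : V3 → ℝ≥0∞, Measurable ψ → ∫⁻ η, ψ η ∂ν =
      ∫⁻ p, ENNReal.ofReal (W p) * ψ (T p) ∂P := by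
    intro ψ hψ
    rw [hν, lintegral_map hψ hT, hμ]
    exact lintegral_withDensity_eq_lintegral_mul _ hWm.ennreal_ofReal (hψ.comp hT)
  have hνle : ν ≤ volume.withDensity fun η => ENNReal.ofReal (D η) := by
    refine Measure.le_iff.2 fun s hs => ?_
    rw [← lintegral_indicator_one hs, hlν _ (measurable_one.indicator hs),
      ← lintegral_indicator_one hs,
      lintegral_withDensity_eq_lintegral_mul _ hDm.ennreal_ofReal (measurable_one.indicator hs)]
    exact hle _ (measurable_one.indicator hs)
  have hac : ν ≪ (volume : Measure V3) :=
    (Measure.absolutelyContinuous_of_le hνle).trans (withDensity_absolutelyContinuous _ _)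
  have hdecomp : ν.HaveLebesgueDecomposition volume :=
    Measure.haveLebesgueDecomposition_of_sigmaFinite ν volume
  set r := ν.rnDeriv (volume : Measure V3) with hr
  have hrm : Measurable r := Measure.measurable_rnDeriv _ _
  have hνr : volume.withDensity r = ν := Measure.withDensity_rnDeriv_eq _ _ hac
  have hrD : r ≤ᵐ[volume] fun η => ENNReal.ofReal (D η) := by
    refine ae_le_of_forall_setLIntegral_le_of_sigmaFinite hrm fun s hs _ => ?_
    rw [← withDensity_apply _ hs, ← withDensity_apply _ hs, hνr]
    exact hνle s
  let k : V3 → ℝ := fun η => min (r η).toReal (D η)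
  have hkm : Measurable k := hrm.ennreal_toReal.min hDm
  have hk0 : ∀ η, 0 ≤ k η := fun η => le_min ENNReal.toReal_nonneg (hD0 η)
  have hkr : (fun η => ENNReal.ofReal (k η)) =ᵐ[volume] r := by
    filter_upwards [hrD] with η hη
    have hfin : r η ≠ ∞ := (hη.trans_lt ENNReal.ofReal_lt_top).ne
    have : k η = (r η).toReal :=
      min_eq_left (ENNReal.toReal_le_of_le_ofReal (hD0 η) hη)
    rw [this, ENNReal.ofReal_toReal hfin]
  have hνk : volume.withDensity (fun η => ENNReal.ofReal (k η)) = ν := by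
    rw [withDensity_congr_ae hkr, hνr]
  refine ⟨k, fun η => ⟨hk0 η, min_le_right _ _⟩, fun g hg ⟨M, hM⟩ => ?_⟩
  have hgi : Integrable g ν := Integrable.of_bound hg.aestronglyMeasurable M
    (Filter.Eventually.of_forall hM)
  constructor
  · have h := (integrable_withDensity_iff_integrable_smul' hkm.ennreal_ofReal
      (Filter.Eventually.of_forall fun η => ENNReal.ofReal_lt_top)).1 (hνk ▸ hgi)
    simpa only [ENNReal.toReal_ofReal (hk0 _), smul_eq_mul] using h
  · calc ∫ p, W p * g (T p) ∂P = ∫ p, g (T p) ∂μ := by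
          rw [hμ, integral_withDensity_eq_integral_toReal_smul hWm.ennreal_ofReal
            (Filter.Eventually.of_forall fun η => ENNReal.ofReal_lt_top)]
          simp only [ENNReal.toReal_ofReal (hW0 _), smul_eq_mul]
      _ = ∫ η, g η ∂ν := (integral_map hT.aemeasurable hg.aestronglyMeasurable).symm
      _ = ∫ η, k η * g η := by
          rw [← hνk, integral_withDensity_eq_integral_toReal_smul hkm.ennreal_ofReal
            (Filter.Eventually.of_forall fun η => ENNReal.ofReal_lt_top)]
          simp only [ENNReal.toReal_ofReal (hk0 _), smul_eq_mul]

/-- A collision integrand at fixed `v`, as a function of `(u, ω)`: radial factor `X`, Maxwellian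
factor `E`. -/
def coll (γ : ℝ) (b X : ℝ → ℝ) (v : V3) (E : V3 × Sph → ℝ) (p : V3 × Sph) : ℝ :=
  Bker γ b (v - p.1) p.2 * X ‖v - p.1‖ * E p

/-- Maxwellian factor of the gain term evaluated at `v'`. -/
def facA (v : V3) (p : V3 × Sph) : ℝ := √(gm p.1 * gm (upost v p.1 p.2))

/-- Maxwellian factor of the gain term evaluated at `u'`. -/
def facB (v : V3) (p : V3 × Sph) : ℝ := √(gm p.1 * gm (vpost v p.1 p.2))

/-- Maxwellian factor of the loss term. -/
def facL (v : V3) (p : V3 × Sph) : ℝ := √(gm v * gm p.1)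

/-- Admissible Maxwellian factors: measurable, nonnegative, with Gaussian decay in `u`. -/
def FacOK (E : V3 × Sph → ℝ) : Prop :=
  Measurable E ∧ ∀ p, 0 ≤ E p ∧ E p ≤ exp (-‖p.1‖ ^ 2 / 4)

lemma sqrt_gm_mul_le (u w : V3) : √(gm u * gm w) ≤ exp (-‖u‖ ^ 2 / 4) := by
  have hπ : (2 * π)⁻¹ ≤ 1 := inv_le_one_of_one_le₀ (by linarith [pi_gt_three])
  rw [sqrt_gm_mul, ← one_mul (exp (-‖u‖ ^ 2 / 4))]
  gcongr
  nlinarith [sq_nonneg ‖w‖]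

lemma facA_ok (v : V3) : FacOK (facA v) := by
  have := measurable_gm
  refine ⟨by unfold facA upost; fun_prop, fun p => ⟨sqrt_nonneg _, sqrt_gm_mul_le _ _⟩⟩

lemma facB_ok (v : V3) : FacOK (facB v) := by
  have := measurable_gm
  refine ⟨by unfold facB vpost; fun_prop, fun p => ⟨sqrt_nonneg _, sqrt_gm_mul_le _ _⟩⟩

lemma facL_ok (v : V3) : FacOK (facL v) := by
  have := measurable_gm
  refine ⟨by unfold facL; fun_prop, fun p => ⟨sqrt_nonneg _, ?_⟩⟩
  unfold facL
  rw [mul_comm]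
  exact sqrt_gm_mul_le _ _

lemma measurable_coll {γ : ℝ} {b X : ℝ → ℝ} (hb : Measurable b) (hX : Measurable X) (v : V3)
    {E : V3 × Sph → ℝ} (hE : FacOK E) : Measurable (coll γ b X v E) := by
  have := hE.1
  unfold coll Bker
  fun_prop

/-- The two bounds on the collision kernel; both sides vanish at `z = 0` since `b 0 = 0`. -/
lemma Bker_bounds {γ : ℝ} {b : ℝ → ℝ} {Cb : ℝ} (hC : 0 ≤ Cb)
    (hb : ∀ s, 0 ≤ b s ∧ b s ≤ Cb * |s|) (z : V3) (ω : Sph) :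
    0 ≤ Bker γ b z ω ∧ Bker γ b z ω ≤ Cb * (‖z‖ ^ (γ - 1) * |⟪z, (ω : V3)⟫|) ∧
      Bker γ b z ω ≤ Cb * ‖z‖ ^ γ := by
  have h0 : 0 ≤ Bker γ b z ω := mul_nonneg (by positivity) (hb _).1
  have h1 : Bker γ b z ω ≤ Cb * (‖z‖ ^ (γ - 1) * |⟪z, (ω : V3)⟫|) := by
    rcases eq_or_ne z 0 with rfl | hz
    · have : b 0 = 0 := le_antisymm (by simpa using (hb 0).2) (hb 0).1
      simp [Bker, this]
    · have hzn : 0 < ‖z‖ := norm_pos_iff.2 hz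
      calc Bker γ b z ω ≤ ‖z‖ ^ γ * (Cb * |⟪z, (ω : V3)⟫ / ‖z‖|) := by
            unfold Bker
            gcongr
            exact (hb _).2
        _ = _ := by
            rw [abs_div, abs_of_pos hzn, rpow_sub_one hzn.ne']; ring
  have h2 : Bker γ b z ω ≤ Cb * ‖z‖ ^ γ := by
    have hin : |⟪z, (ω : V3)⟫ / ‖z‖| ≤ 1 := by
      rw [abs_div, abs_norm]
      refine div_le_one_of_le₀ ?_ (norm_nonneg _)
      simpa [norm_eq_of_mem_sphere ω] using abs_real_inner_le_norm z (ω : V3)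
    unfold Bker
    rw [mul_comm Cb]
    gcongr
    calc _ ≤ Cb * |⟪z, (ω : V3)⟫ / ‖z‖| := (hb _).2
      _ ≤ Cb * 1 := by gcongr
      _ = Cb := mul_one _
  exact ⟨h0, h1, h2⟩

lemma integrable_rpow_gauss {γ : ℝ} (hγ1 : -3 < γ) (v : V3) :
    Integrable fun u : V3 => ‖v - u‖ ^ γ * exp (-‖u‖ ^ 2 / 4) := by
  obtain ⟨C, hC, h⟩ := radial_estimate (a := -γ) (ε := 1 / 16) (by linarith) (by norm_num)
  have h0 := h 0
  refine ⟨Measurable.aestronglyMeasurable (by fun_prop), ?_⟩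
  rw [hasFiniteIntegral_iff_ofReal (Filter.Eventually.of_forall fun u => by positivity),
    ← lintegral_sub_left_eq_self _ v]
  calc _ ≤ ∫⁻ x : V3, ENNReal.ofReal (exp (‖v‖ ^ 2 / 4)) * ENNReal.ofReal (‖x‖ ^ (- -γ) *
        exp (-(1 / 16) * (‖x‖ ^ 2 + (2 * ⟪(0 : V3), x⟫ / ‖x‖ + ‖x‖) ^ 2))) := by
        refine lintegral_mono fun x => ?_
        rw [← ENNReal.ofReal_mul (by positivity)]
        refine ENNReal.ofReal_le_ofReal ?_
        rw [sub_sub_cancel, neg_neg, mul_left_comm, ← exp_add]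
        gcongr
        simp only [inner_zero_left, mul_zero, zero_div, zero_add]
        have h1 : ‖x‖ ≤ ‖v‖ + ‖v - x‖ := by
          have := norm_sub_le v (v - x)
          rwa [sub_sub_cancel] at this
        nlinarith [norm_nonneg x, norm_nonneg v, norm_nonneg (v - x),
          sq_nonneg (‖v‖ - ‖v - x‖)]
    _ < ∞ := by
        rw [lintegral_const_mul' _ _ ENNReal.ofReal_ne_top]
        exact ENNReal.mul_lt_top ENNReal.ofReal_lt_top (h0.trans_lt ENNReal.ofReal_lt_top)

lemma integrable_coll {γ : ℝ} (hγ1 : -3 < γ) {b X : ℝ → ℝ} (hb : KernelOK b) (hX : Measurable X)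
    (hX0 : ∀ t, 0 ≤ X t) (hX1 : ∀ t, X t ≤ 1) (v : V3) {E : V3 × Sph → ℝ} (hE : FacOK E) :
    Integrable (coll γ b X v E) (volume.prod sphM) := by
  obtain ⟨hbm, Cb, hCb⟩ := hb
  have hCb' : ∀ s, 0 ≤ b s ∧ b s ≤ |Cb| * |s| := fun s =>
    ⟨(hCb s).1, (hCb s).2.trans (by gcongr; exact le_abs_self _)⟩
  have hdom := ((integrable_rpow_gauss hγ1 v).const_mul |Cb|).comp_fst sphM
  refine hdom.mono' (measurable_coll hbm hX v hE).aestronglyMeasurable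
    (Filter.Eventually.of_forall fun p => ?_)
  obtain ⟨h0, -, h2⟩ := Bker_bounds (γ := γ) (abs_nonneg Cb) hCb' (v - p.1) p.2
  obtain ⟨hE0, hE1⟩ := hE.2 p
  have hXp0 := hX0 ‖v - p.1‖
  rw [coll, Real.norm_of_nonneg (by positivity)]
  calc _ ≤ (|Cb| * ‖v - p.1‖ ^ γ) * 1 * exp (-‖p.1‖ ^ 2 / 4) := by
        gcongr
        exact hX1 _
    _ = _ := by ring

lemma integrable_coll_mul {γ : ℝ} (hγ1 : -3 < γ) {b X : ℝ → ℝ} (hb : KernelOK b)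
    (hX : Measurable X) (hX0 : ∀ t, 0 ≤ X t) (hX1 : ∀ t, X t ≤ 1) (v : V3) {E : V3 × Sph → ℝ}
    (hE : FacOK E) {T : V3 × Sph → V3} (hT : Measurable T) {g : V3 → ℝ} (hg : Measurable g)
    (hM : ∃ M : ℝ, ∀ v, |g v| ≤ M) :
    Integrable (fun p => coll γ b X v E p * g (T p)) (volume.prod sphM) := by
  obtain ⟨M, hM⟩ := hM
  exact (integrable_coll hγ1 hb hX hX0 hX1 v hE).mul_bdd (c := M)
    (hg.comp hT).aestronglyMeasurable (Filter.Eventually.of_forall fun p => hM _)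

lemma measurable_vpost (v : V3) : Measurable fun p : V3 × Sph => vpost v p.1 p.2 := by
  unfold vpost; fun_prop

lemma measurable_upost (v : V3) : Measurable fun p : V3 × Sph => upost v p.1 p.2 := by
  unfold upost; fun_prop

/-- Splitting of the cut-off operator into its gain and loss parts, as integrals over
`V3 × Sph`. -/
lemma Kcut_eq {γ : ℝ} (hγ1 : -3 < γ) {b X : ℝ → ℝ} (hb : KernelOK b)
    (hX : Measurable X) (hX0 : ∀ t, 0 ≤ X t) (hX1 : ∀ t, X t ≤ 1) (v : V3)
    {g : V3 → ℝ} (hg : Measurable g) (hM : ∃ M : ℝ, ∀ v, |g v| ≤ M) :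
    Kcut γ b X g v =
      ∫ p, coll γ b X v (facA v) p * g (vpost v p.1 p.2) ∂(volume.prod sphM) +
      ∫ p, coll γ b X v (facB v) p * g (upost v p.1 p.2) ∂(volume.prod sphM) -
      ∫ p, coll γ b X v (facL v) p * g p.1 ∂(volume.prod sphM) := by
  have hA := integrable_coll_mul hγ1 hb hX hX0 hX1 v (facA_ok v) (measurable_vpost v) hg hM
  have hB := integrable_coll_mul hγ1 hb hX hX0 hX1 v (facB_ok v) (measurable_upost v) hg hM
  have hL := integrable_coll_mul hγ1 hb hX hX0 hX1 v (facL_ok v) measurable_fst hg hM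
  have hAB : Integrable (fun p => coll γ b X v (facA v) p * g (vpost v p.1 p.2) +
      coll γ b X v (facB v) p * g (upost v p.1 p.2)) (volume.prod sphM) := hA.add hB
  have hABL : Integrable (fun p => coll γ b X v (facA v) p * g (vpost v p.1 p.2) +
      coll γ b X v (facB v) p * g (upost v p.1 p.2) - coll γ b X v (facL v) p * g p.1)
      (volume.prod sphM) := hAB.sub hL
  rw [← integral_add hA hB, ← integral_sub hAB hL, integral_prod _ hABL]
  unfold Kcut
  refine integral_congr_ae (Filter.Eventually.of_forall fun u => ?_)
  refine integral_congr_ae (Filter.Eventually.of_forall fun ω => ?_)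
  simp only [coll, facA, facB, facL]
  ring

/-- Linearity in the cutoff: `K - K^m` has the radial factor `1 - χ`. Every collision integrand is
integrable, so that the Bochner integrals do split. -/
lemma Kop_sub_Kcut {γ : ℝ} (hγ1 : -3 < γ) {b χ : ℝ → ℝ} (hb : KernelOK b)
    (hX : Measurable χ) (hX0 : ∀ t, 0 ≤ χ t) (hX1 : ∀ t, χ t ≤ 1) (v : V3)
    {g : V3 → ℝ} (hg : Measurable g) (hM : ∃ M : ℝ, ∀ v, |g v| ≤ M) :
    Kop γ b g v - Kcut γ b χ g v = Kcut γ b (fun t => 1 - χ t) g v := by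
  have key : ∀ E : V3 × Sph → ℝ, FacOK E → ∀ T : V3 × Sph → V3, Measurable T →
      ∫ p, coll γ b (fun t => 1 - χ t) v E p * g (T p) ∂(volume.prod sphM) =
      ∫ p, coll γ b (fun _ => 1) v E p * g (T p) ∂(volume.prod sphM) -
      ∫ p, coll γ b χ v E p * g (T p) ∂(volume.prod sphM) := by
    intro E hE T hT
    rw [← integral_sub]
    · refine integral_congr_ae (Filter.Eventually.of_forall fun p => ?_)
      simp only [coll]; ring
    · exact integrable_coll_mul hγ1 hb measurable_const (fun _ => zero_le_one) (fun _ => le_rfl)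
        v hE hT hg hM
    · exact integrable_coll_mul hγ1 hb hX hX0 hX1 v hE hT hg hM
  unfold Kop
  rw [Kcut_eq hγ1 hb hX hX0 hX1 v hg hM,
    Kcut_eq hγ1 hb measurable_const (fun _ => zero_le_one) (fun _ => le_rfl) v hg hM,
    Kcut_eq hγ1 hb (by fun_prop) (fun t => by linarith [hX1 t]) (fun t => by linarith [hX0 t])
      v hg hM,
    key _ (facA_ok v) _ (measurable_vpost v), key _ (facB_ok v) _ (measurable_upost v),
    key _ (facL_ok v) _ measurable_fst]
  ring

/-! ### Loss term and weights -/

/-- Since `(|v|² - |η|²)² ≤ |v - η|² |v + η|²`, the profile dominates a Gaussian in `(v, η)`. -/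
lemma exp_le_profile {v η : V3} (h : v ≠ η) :
    exp (-(‖v‖ ^ 2 + ‖η‖ ^ 2) / 5) ≤ profile v η := by
  have hρ : 0 < ‖v - η‖ := norm_pos_iff.2 (sub_ne_zero.2 h)
  have hin : ⟪v - η, v + η⟫ = ‖v‖ ^ 2 - ‖η‖ ^ 2 := by
    rw [inner_add_right, inner_sub_left, inner_sub_left, real_inner_self_eq_norm_sq,
      real_inner_self_eq_norm_sq, real_inner_comm]
    ring
  have hcs : (‖v‖ ^ 2 - ‖η‖ ^ 2) ^ 2 ≤ ‖v - η‖ ^ 2 * ‖v + η‖ ^ 2 := by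
    rw [← hin, ← mul_pow]
    exact sq_le_sq.2 ((abs_real_inner_le_norm _ _).trans (le_abs_self _))
  have hpar := parallelogram_law_with_norm ℝ v η
  have hdiv : (‖v‖ ^ 2 - ‖η‖ ^ 2) ^ 2 / (16 * ‖v - η‖ ^ 2) ≤ ‖v + η‖ ^ 2 / 16 := by
    rw [div_le_div_iff₀ (by positivity) (by norm_num)]
    linarith
  unfold profile
  rw [← exp_add, neg_div (16 * ‖v - η‖ ^ 2)]
  refine exp_le_exp.2 ?_
  nlinarith [sq_nonneg ‖v + η‖]

/-- The cutoff removes `|v - η| < m`, so that `|v - η| ^ (γ - 1) ≤ m ^ (γ - 1)`; the remaining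
factors `|v - η|²` and `(1 + |v| + |η|) ^ (1 - γ)` are absorbed by the gap between the Gaussian
`e^{-(|v|² + |η|²) / 4}` and `profile`. -/
lemma loss_pointwise {γ : ℝ} (hγ2 : γ ≤ 1) : ∃ C > (0 : ℝ), ∀ m, 0 < m → ∀ x, 0 ≤ x → x ≤ 1 →
    ∀ v η : V3, v ≠ η → (‖v - η‖ < m → x = 0) →
    ‖v - η‖ ^ γ * x * exp (-(‖v‖ ^ 2 + ‖η‖ ^ 2) / 4) ≤
      C * m ^ (γ - 1) * ‖v - η‖⁻¹ * (1 + ‖v‖ + ‖η‖) ^ (-(1 - γ)) * profile v η := by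
  set p := 1 - γ with hp
  have hp0 : 0 ≤ p := by linarith
  refine ⟨80 * exp (p ^ 2 / (4 * (1 / 80))), by positivity, fun m hm x hx0 hx1 v η hne hx => ?_⟩
  have hρ : 0 < ‖v - η‖ := norm_pos_iff.2 (sub_ne_zero.2 hne)
  have hpr := profile_pos v η
  rcases lt_or_ge ‖v - η‖ m with hlt | hge
  · rw [hx hlt, mul_zero, zero_mul]; positivity
  set E := ‖v‖ ^ 2 + ‖η‖ ^ 2 with hE
  have hE0 : 0 ≤ E := by positivity
  set N := 1 + ‖v‖ + ‖η‖ with hN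
  have hN0 : 0 < N := by positivity
  have hpar := parallelogram_law_with_norm ℝ v η
  have hρ2 : ‖v - η‖ ^ 2 ≤ 2 * E := by nlinarith [sq_nonneg ‖v + η‖]
  have hpow : ‖v - η‖ ^ (γ - 1) ≤ m ^ (γ - 1) :=
    rpow_le_rpow_of_nonpos hm hge (by linarith)
  have hNp : N ^ p ≤ exp (p ^ 2 / (4 * (1 / 80))) * exp (E / 40) := by
    have h := one_add_rpow_le_exp hp0 (ε := 1 / 80) (by norm_num) (x := ‖v‖ + ‖η‖) (by positivity)
    rw [← add_assoc] at h
    refine h.trans ?_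
    gcongr
    nlinarith [sq_nonneg (‖v‖ - ‖η‖)]
  have hlin : 2 * E ≤ 80 * exp (E / 40) := by
    have := add_one_le_exp (E / 40); linarith
  have hpp := exp_le_profile hne
  have hmul : ‖v - η‖ ^ 2 * exp (-E / 4) * N ^ p ≤
      80 * exp (p ^ 2 / (4 * (1 / 80))) * profile v η := by
    calc _ ≤ (80 * exp (E / 40)) * exp (-E / 4) *
          (exp (p ^ 2 / (4 * (1 / 80))) * exp (E / 40)) := by
          gcongr
          exact hρ2.trans hlin
      _ = 80 * exp (p ^ 2 / (4 * (1 / 80))) * exp (-E / 5) := by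
          rw [show -E / 5 = E / 40 + -E / 4 + E / 40 by ring, exp_add, exp_add]; ring
      _ ≤ _ := by gcongr
  have hsplit : ‖v - η‖ ^ γ = ‖v - η‖ ^ (γ - 1) * ‖v - η‖⁻¹ * ‖v - η‖ ^ 2 := by
    rw [rpow_sub_one hρ.ne']; field_simp
  have hNN : N ^ p * N ^ (-p) = 1 := by rw [← rpow_add hN0, add_neg_cancel, rpow_zero]
  calc ‖v - η‖ ^ γ * x * exp (-E / 4)
      ≤ ‖v - η‖ ^ γ * 1 * exp (-E / 4) := by gcongr
    _ = ‖v - η‖ ^ (γ - 1) * ‖v - η‖⁻¹ * (‖v - η‖ ^ 2 * exp (-E / 4) * N ^ p) * N ^ (-p) := by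
        rw [hsplit, mul_one]
        linear_combination (-(‖v - η‖ ^ (γ - 1) * ‖v - η‖⁻¹ * ‖v - η‖ ^ 2 * exp (-E / 4))) * hNN
    _ ≤ m ^ (γ - 1) * ‖v - η‖⁻¹ * (80 * exp (p ^ 2 / (4 * (1 / 80))) * profile v η) *
        N ^ (-p) := by gcongr
    _ = _ := by ring

/-- The weight ratio is absorbed by the profile: `|v|² - |η|²` is `|v - η|` times the quantity
controlled by the second Gaussian, and `q ≤ 1/8` keeps the resulting quadratic form definite. -/
lemma profile_wgt {β q : ℝ} (hβ : 0 ≤ β) (hq0 : 0 ≤ q) (hq : q < 1 / 8) :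
    ∃ C > (0 : ℝ), ∀ v x : V3, x ≠ 0 → profile v (v + x) * (wgt q β v / wgt q β (v + x)) ≤
      C * exp (-(1 / 100) * (‖x‖ ^ 2 + (2 * ⟪v, x⟫ / ‖x‖ + ‖x‖) ^ 2)) := by
  refine ⟨2 ^ (β / 2) * exp (β ^ 2 / (4 * (1 / 200))), by positivity, fun v x hx => ?_⟩
  have hρ : 0 < ‖x‖ := norm_pos_iff.2 hx
  set ρ := ‖x‖ with hρd
  set S := 2 * ⟪v, x⟫ / ρ + ρ with hS
  have hη : ‖v + x‖ ^ 2 = ‖v‖ ^ 2 + S * ρ := by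
    rw [norm_add_sq_real, hS, add_mul, div_mul_cancel₀ _ hρ.ne']; ring
  have hprof : profile v (v + x) = exp (-ρ ^ 2 / 10) * exp (-S ^ 2 / 16) := by
    unfold profile
    rw [hη, show v - (v + x) = -x by abel, norm_neg]
    congr 2
    rw [← hρd]
    field_simp
    ring
  have hV : ‖v‖ ≤ ‖v + x‖ + ρ := by
    have := norm_sub_le (v + x) x
    rwa [add_sub_cancel_right] at this
  set H := ‖v + x‖ with hH
  have hH0 : 0 ≤ H := norm_nonneg _
  have hbase : 1 + ‖v‖ ^ 2 ≤ 2 * (1 + ρ) ^ (2 : ℝ) * (1 + H ^ 2) := by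
    rw [rpow_two]
    have h1 : ‖v‖ ^ 2 ≤ 2 * H ^ 2 + 2 * ρ ^ 2 := by
      nlinarith [norm_nonneg v, sq_nonneg (H - ρ)]
    nlinarith [mul_nonneg (sq_nonneg H) hρ.le, mul_nonneg (sq_nonneg H) (sq_nonneg ρ)]
  have hpoly : (1 + ‖v‖ ^ 2) ^ (β / 2) ≤ 2 ^ (β / 2) * (1 + ρ) ^ β * (1 + H ^ 2) ^ (β / 2) := by
    refine (rpow_le_rpow (by positivity) hbase (by positivity)).trans (le_of_eq ?_)
    rw [mul_rpow (by positivity) (by positivity), mul_rpow (by positivity) (by positivity),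
      ← rpow_mul (by positivity)]
    congr 3; ring
  have hexpβ := one_add_rpow_le_exp hβ (ε := 1 / 200) (by norm_num) hρ.le
  have hw : wgt q β v / wgt q β (v + x) ≤
      2 ^ (β / 2) * (exp (β ^ 2 / (4 * (1 / 200))) * exp (1 / 200 * ρ ^ 2)) *
        exp (q * (-(S * ρ))) := by
    have hHp : 0 < (1 + H ^ 2) ^ (β / 2) := by positivity
    unfold wgt
    rw [← hH, div_le_iff₀ (by positivity)]
    calc _ ≤ (2 ^ (β / 2) * (1 + ρ) ^ β * (1 + H ^ 2) ^ (β / 2)) * exp (q * ‖v‖ ^ 2) := by gcongr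
      _ ≤ (2 ^ (β / 2) * (exp (β ^ 2 / (4 * (1 / 200))) * exp (1 / 200 * ρ ^ 2)) *
          (1 + H ^ 2) ^ (β / 2)) * exp (q * ‖v‖ ^ 2) := by gcongr
      _ = _ := by
          rw [show q * ‖v‖ ^ 2 = q * (-(S * ρ)) + q * H ^ 2 by rw [hη]; ring, exp_add]
          ring
  have hqS : q * (-(S * ρ)) ≤ |S| * ρ / 8 := by
    have h1 : -(S * ρ) ≤ |S| * ρ := by nlinarith [neg_le_abs S]
    have h2 : 0 ≤ |S| * ρ := by positivity
    nlinarith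
  calc _ ≤ exp (-ρ ^ 2 / 10) * exp (-S ^ 2 / 16) *
        (2 ^ (β / 2) * (exp (β ^ 2 / (4 * (1 / 200))) * exp (1 / 200 * ρ ^ 2)) *
        exp (q * (-(S * ρ)))) := by
        rw [hprof]; gcongr
    _ = 2 ^ (β / 2) * exp (β ^ 2 / (4 * (1 / 200))) *
        exp (-ρ ^ 2 / 10 + -S ^ 2 / 16 + 1 / 200 * ρ ^ 2 + q * (-(S * ρ))) := by
        rw [exp_add, exp_add, exp_add]; ring
    _ ≤ _ := by
        gcongr
        nlinarith [sq_nonneg (21 * |S| - 25 * ρ), sq_abs S, sq_nonneg ρ]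

/-- Weighted moments of the profile. -/
lemma weighted_estimate {β q a : ℝ} (hβ : 0 ≤ β) (hq0 : 0 ≤ q) (hq : q < 1 / 8) (ha : a < 3) :
    ∃ C > (0 : ℝ), ∀ v : V3, ∫⁻ η : V3, ENNReal.ofReal (‖v - η‖ ^ (-a) *
      (profile v η * (wgt q β v / wgt q β η))) ≤ ENNReal.ofReal (C * (1 + ‖v‖)⁻¹) := by
  obtain ⟨C1, hC1, h1⟩ := profile_wgt hβ hq0 hq
  obtain ⟨C2, hC2, h2⟩ := radial_estimate ha (ε := 1 / 100) (by norm_num)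
  refine ⟨C1 * C2, by positivity, fun v => ?_⟩
  rw [← lintegral_add_left_eq_self _ v]
  calc _ ≤ ∫⁻ x : V3, ENNReal.ofReal C1 * ENNReal.ofReal (‖x‖ ^ (-a) *
        exp (-(1 / 100) * (‖x‖ ^ 2 + (2 * ⟪v, x⟫ / ‖x‖ + ‖x‖) ^ 2))) := by
        refine lintegral_mono_ae ?_
        filter_upwards [compl_mem_ae_iff.2 (measure_singleton (0 : V3))] with x hx
        rw [← ENNReal.ofReal_mul hC1.le]
        refine ENNReal.ofReal_le_ofReal ?_
        rw [show v - (v + x) = -x by abel, norm_neg, mul_left_comm C1]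
        exact mul_le_mul_of_nonneg_left (h1 v x hx) (by positivity)
    _ = ENNReal.ofReal C1 * ∫⁻ x : V3, ENNReal.ofReal (‖x‖ ^ (-a) *
        exp (-(1 / 100) * (‖x‖ ^ 2 + (2 * ⟪v, x⟫ / ‖x‖ + ‖x‖) ^ 2))) :=
        lintegral_const_mul' _ _ ENNReal.ofReal_ne_top
    _ ≤ ENNReal.ofReal C1 * ENNReal.ofReal (C2 * (1 + ‖v‖)⁻¹) := by gcongr; exact h2 v
    _ = _ := by rw [← ENNReal.ofReal_mul hC1.le, mul_assoc]

/-- A nonnegative function with lower integral at most `c` has Bochner integral at most `c`; if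
it is not integrable, its Bochner integral is `0`. -/
lemma integral_le_of_lintegral_le {f : V3 → ℝ} (hf : ∀ η, 0 ≤ f η) {c : ℝ} (hc : 0 ≤ c)
    (h : ∫⁻ η, ENNReal.ofReal (f η) ≤ ENNReal.ofReal c) : ∫ η, f η ≤ c := by
  by_cases hi : Integrable f
  · rw [integral_eq_lintegral_of_nonneg_ae (Filter.Eventually.of_forall hf) hi.1]
    exact ENNReal.toReal_le_of_le_ofReal hc h
  · rw [integral_undef hi]; exact hc

/-! ### The kernel of the cut-off operator -/

/-- At fixed `v`, the operator with radial factor `X` is an integral operator, with a kernel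
dominated by the gain and loss bounds. -/
lemma exists_kernel_Kcut {γ : ℝ} (hγ1 : -3 < γ) (hγ2 : γ ≤ 1) {b : ℝ → ℝ} (hb : KernelOK b) :
    ∃ A > (0 : ℝ), ∃ B > (0 : ℝ), ∃ c ≥ (0 : ℝ), ∀ m, 0 < m → m ≤ 1 → ∀ X : ℝ → ℝ,
    Measurable X → (∀ t, 0 ≤ X t) → (∀ t, X t ≤ 1) → (∀ t, t < m → X t = 0) → ∀ v : V3,
    ∃ k : V3 → ℝ, (∀ η, |k η| ≤ c * (gainBd γ m A B v η +
        ‖v - η‖ ^ γ * X ‖v - η‖ * exp (-(‖v‖ ^ 2 + ‖η‖ ^ 2) / 4))) ∧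
      ∀ g : V3 → ℝ, Measurable g → (∃ M : ℝ, ∀ η, |g η| ≤ M) →
        Kcut γ b X g v = ∫ η, k η * g η := by
  obtain ⟨A, hA, B, hB, hgain⟩ := gain_bound hγ1 hγ2
  obtain ⟨hbm, Cb', hCb'⟩ := id hb
  set Cb := |Cb'| with hCbd
  have hCb0 : 0 ≤ Cb := abs_nonneg _
  have hCb : ∀ s, 0 ≤ b s ∧ b s ≤ Cb * |s| := fun s =>
    ⟨(hCb' s).1, (hCb' s).2.trans (by gcongr; exact le_abs_self _)⟩
  set L := Cb * (sphM univ).toReal with hL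
  have hL0 : 0 ≤ L := by positivity
  refine ⟨A, hA, B, hB, 4 * Cb + L, by positivity, fun m hm hm1 X hXm hX0 hX1 hXz v => ?_⟩
  have hgm := measurable_gm
  have hG0 : ∀ η, 0 ≤ gainBd γ m A B v η := fun η => by
    have := profile_pos v η
    exact le_min (by positivity) (by positivity)
  have hcoll0 : ∀ E, FacOK E → ∀ p, 0 ≤ coll γ b X v E p := fun E hE p =>
    mul_nonneg (mul_nonneg (Bker_bounds hCb0 hCb _ _).1 (hX0 _)) (hE.2 p).1
  -- the gain densities
  have hgainle : ∀ E, FacOK E → ∀ T : V3 × Sph → V3, Measurable T →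
      (∀ ψ : V3 → ℝ≥0∞, Measurable ψ →
        ∫⁻ u : V3, ∫⁻ ω : Sph, ENNReal.ofReal (‖v - u‖ ^ (γ - 1) * |⟪v - u, (ω : V3)⟫| *
          X ‖v - u‖ * E (u, ω)) * ψ (T (u, ω)) ∂sphM ≤
        2 * ∫⁻ η : V3, ENNReal.ofReal (gainBd γ m A B v η) * ψ η) →
      ∀ ψ : V3 → ℝ≥0∞, Measurable ψ →
        ∫⁻ p, ENNReal.ofReal (coll γ b X v E p) * ψ (T p) ∂(volume.prod sphM) ≤
          ∫⁻ η, ENNReal.ofReal (2 * Cb * gainBd γ m A B v η) * ψ η := by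
    intro E hE T hT h ψ hψ
    have hcm := measurable_coll (γ := γ) hbm hXm v hE
    rw [lintegral_prod _ (by fun_prop)]
    calc _ ≤ ∫⁻ u : V3, ∫⁻ ω : Sph, ENNReal.ofReal Cb * (ENNReal.ofReal (‖v - u‖ ^ (γ - 1) *
          |⟪v - u, (ω : V3)⟫| * X ‖v - u‖ * E (u, ω)) * ψ (T (u, ω))) ∂sphM := by
          refine lintegral_mono fun u => lintegral_mono fun ω => ?_
          rw [← mul_assoc, ← ENNReal.ofReal_mul hCb0]
          gcongr ENNReal.ofReal ?_ * _
          have hX := hX0 ‖v - u‖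
          have hE0 := (hE.2 (u, ω)).1
          calc _ ≤ Cb * (‖v - u‖ ^ (γ - 1) * |⟪v - u, (ω : V3)⟫|) * X ‖v - u‖ * E (u, ω) := by
                unfold coll
                gcongr
                exact (Bker_bounds hCb0 hCb _ _).2.1
            _ = _ := by ring
      _ = ENNReal.ofReal Cb * ∫⁻ u : V3, ∫⁻ ω : Sph, ENNReal.ofReal (‖v - u‖ ^ (γ - 1) *
          |⟪v - u, (ω : V3)⟫| * X ‖v - u‖ * E (u, ω)) * ψ (T (u, ω)) ∂sphM := by
          simp_rw [lintegral_const_mul' _ _ ENNReal.ofReal_ne_top]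
      _ ≤ ENNReal.ofReal Cb * (2 * ∫⁻ η : V3, ENNReal.ofReal (gainBd γ m A B v η) * ψ η) := by
          gcongr
          exact h ψ hψ
      _ = _ := by
          have h2 : ENNReal.ofReal Cb * 2 = ENNReal.ofReal (2 * Cb) := by
            rw [mul_comm, ENNReal.ofReal_mul zero_le_two, ENNReal.ofReal_ofNat]
          rw [← mul_assoc, h2, ← lintegral_const_mul' _ _ ENNReal.ofReal_ne_top]
          refine lintegral_congr fun η => ?_
          rw [← mul_assoc, ← ENNReal.ofReal_mul (by positivity)]
  have hGm : Measurable fun η => 2 * Cb * gainBd γ m A B v η :=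
    (measurable_gainBd γ m A B v).const_mul _
  have hGG0 : ∀ η, 0 ≤ 2 * Cb * gainBd γ m A B v η := fun η => by
    have := hG0 η
    positivity
  obtain ⟨ka, hka, hka'⟩ := exists_kernel _ (measurable_coll (γ := γ) hbm hXm v (facA_ok v))
    (hcoll0 _ (facA_ok v)) (integrable_coll hγ1 hb hXm hX0 hX1 v (facA_ok v)) _
    (measurable_vpost v) _ hGm hGG0
    (hgainle _ (facA_ok v) _ (measurable_vpost v) fun ψ hψ =>
      hgain m hm hm1 X hXm hX0 hX1 hXz v ψ hψ)
  obtain ⟨kb, hkb, hkb'⟩ := exists_kernel _ (measurable_coll (γ := γ) hbm hXm v (facB_ok v))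
    (hcoll0 _ (facB_ok v)) (integrable_coll hγ1 hb hXm hX0 hX1 v (facB_ok v)) _
    (measurable_upost v) _ hGm hGG0
    (hgainle _ (facB_ok v) _ (measurable_upost v) fun ψ hψ =>
      (gain_bound_swap X v ψ hψ).trans_le (hgain m hm hm1 X hXm hX0 hX1 hXz v ψ hψ))
  -- the loss density
  obtain ⟨kl, hkl, hkl'⟩ := exists_kernel _ (measurable_coll (γ := γ) hbm hXm v (facL_ok v))
    (hcoll0 _ (facL_ok v)) (integrable_coll hγ1 hb hXm hX0 hX1 v (facL_ok v)) Prod.fst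
    measurable_fst
    (fun η => L * (‖v - η‖ ^ γ * X ‖v - η‖ * exp (-(‖v‖ ^ 2 + ‖η‖ ^ 2) / 4))) (by fun_prop)
    (fun η => by have := hX0 ‖v - η‖; positivity) (by
      intro ψ hψ
      have hcm := measurable_coll (γ := γ) hbm hXm v (facL_ok v)
      rw [lintegral_prod _ (by fun_prop)]
      refine lintegral_mono fun u => ?_
      have hX := hX0 ‖v - u‖
      have hπ : (2 * π)⁻¹ ≤ 1 := inv_le_one_of_one_le₀ (by linarith [pi_gt_three])
      calc _ ≤ ∫⁻ ω : Sph, ENNReal.ofReal (Cb * (‖v - u‖ ^ γ * X ‖v - u‖ *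
            exp (-(‖v‖ ^ 2 + ‖u‖ ^ 2) / 4))) * ψ u ∂sphM := by
            refine lintegral_mono fun ω => ?_
            simp only
            gcongr ENNReal.ofReal ?_ * _
            unfold coll facL
            rw [sqrt_gm_mul]
            calc _ ≤ (Cb * ‖v - u‖ ^ γ) * X ‖v - u‖ *
                  (1 * exp (-(‖v‖ ^ 2 + ‖u‖ ^ 2) / 4)) := by
                  gcongr
                  exact (Bker_bounds hCb0 hCb _ _).2.2
              _ = _ := by ring
        _ = _ := by
            rw [lintegral_const, hL, mul_right_comm]
            congr 1
            nth_rw 1 [← ENNReal.ofReal_toReal (measure_ne_top sphM univ)]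
            rw [← ENNReal.ofReal_mul (by positivity)]
            congr 1; ring)
  refine ⟨fun η => ka η + kb η - kl η, fun η => ?_, fun g hg hM => ?_⟩
  · have hX := hX0 ‖v - η‖
    have h1 := hka η
    have h2 := hkb η
    have h3 := hkl η
    set G := gainBd γ m A B v η with hGd
    have hGn : 0 ≤ G := hG0 η
    set l := ‖v - η‖ ^ γ * X ‖v - η‖ * exp (-(‖v‖ ^ 2 + ‖η‖ ^ 2) / 4) with hl
    have hl0 : 0 ≤ l := by positivity
    have := mul_nonneg hL0 hGn
    have := mul_nonneg hCb0 hl0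
    rw [abs_le]
    constructor <;> nlinarith
  · obtain ⟨i1, e1⟩ := hka' g hg hM
    obtain ⟨i2, e2⟩ := hkb' g hg hM
    obtain ⟨i3, e3⟩ := hkl' g hg hM
    have i12 : Integrable fun η => ka η * g η + kb η * g η := i1.add i2
    rw [Kcut_eq hγ1 hb hXm hX0 hX1 v hg hM, e1, e2, e3, ← integral_add i1 i2,
      ← integral_sub i12 i3]
    refine integral_congr_ae (Filter.Eventually.of_forall fun η => ?_)
    simp only
    ring

/-- Kernel estimates for the remainder `K^c = K - K^m` (Lemma 2.3). -/
theorem Kc_kernel_estimates (γ : ℝ) (hγ1 : -3 < γ) (hγ2 : γ ≤ 1)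
    (b : ℝ → ℝ) (hb : KernelOK b)
    (β q : ℝ) (hβ : 0 ≤ β) (hq0 : 0 ≤ q) (hq : q < 1 / 8) :
    ∃ C > (0 : ℝ), ∀ m : ℝ, m ∈ Set.Ioc (0 : ℝ) 1 → ∀ χ : ℝ → ℝ, IsCutoff m χ →
      ∃ k : V3 → V3 → ℝ,
        -- `K^c = K - K^m` is an integral operator with kernel `k`
        (∀ g : V3 → ℝ, Measurable g → (∃ M : ℝ, ∀ v : V3, |g v| ≤ M) →
          ∀ v : V3, Kop γ b g v - Kcut γ b χ g v = ∫ η : V3, k v η * g η) ∧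
        -- estimate (i), i.e. (2.5)
        (∀ v η : V3, v ≠ η →
          |k v η| ≤ C * m ^ (γ - 1) * ‖v - η‖⁻¹ * (1 + ‖v‖ + ‖η‖) ^ (-(1 - γ)) *
            Real.exp (-‖v - η‖ ^ 2 / 10) *
            Real.exp (-(‖v‖ ^ 2 - ‖η‖ ^ 2) ^ 2 / (16 * ‖v - η‖ ^ 2))) ∧
        -- estimate (ii), i.e. (2.7)
        (∀ v η : V3, v ≠ η →
          |k v η| ≤ C * ‖v - η‖ ^ γ * Real.exp (-‖v‖ ^ 2 / 4) * Real.exp (-‖η‖ ^ 2 / 4)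
            + C * ‖v - η‖ ^ (-(3 - γ) / 2) * Real.exp (-‖v - η‖ ^ 2 / 10) *
              Real.exp (-(‖v‖ ^ 2 - ‖η‖ ^ 2) ^ 2 / (16 * ‖v - η‖ ^ 2))) ∧
        -- estimate (iii), first bound (2.8)
        (∀ v : V3,
          (∫ η : V3, |k v η| * (wgt q β v / wgt q β η)) ≤
            C * m ^ (γ - 1) * (1 + ‖v‖) ^ (γ - 2)) ∧
        -- estimate (iii), second bound
        (∀ v : V3,
          (∫ η : V3, |k v η| * (wgt q β v / wgt q β η)) ≤ C * (1 + ‖v‖)⁻¹) := by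
  obtain ⟨A, hA, B, hB, c, hc, hker⟩ := exists_kernel_Kcut hγ1 hγ2 hb
  obtain ⟨D, hD, hloss⟩ := loss_pointwise hγ2
  obtain ⟨W1, hW1, hw1⟩ := weighted_estimate (a := 1) hβ hq0 hq (by norm_num)
  obtain ⟨W2, hW2, hw2⟩ := weighted_estimate (a := (3 - γ) / 2) hβ hq0 hq (by linarith)
  obtain ⟨W3, hW3, hw3⟩ := weighted_estimate (a := -γ) hβ hq0 hq (by linarith)
  set C := c * (A + D) + c + c * B + c * (A + D) * W1 + c * W3 + c * B * W2 + 1 with hC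
  have p1 : 0 ≤ c * (A + D) := by positivity
  have p2 : 0 ≤ c * B := by positivity
  have p3 : 0 ≤ c * (A + D) * W1 := by positivity
  have p4 : 0 ≤ c * W3 := by positivity
  have p5 : 0 ≤ c * B * W2 := by positivity
  have hC0 : 0 < C := by positivity
  refine ⟨C, hC0, fun m ⟨hm, hm1⟩ χ ⟨hχs, hχ01, hχ1, _⟩ => ?_⟩
  have hχm : Measurable χ := hχs.continuous.measurable
  choose k hk hkrep using hker m hm hm1 (fun t => 1 - χ t) (by fun_prop)
    (fun t => by linarith [(hχ01 t).2]) (fun t => by linarith [(hχ01 t).1])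
    (fun t ht => by rw [hχ1 t ht.le, sub_self])
  -- the two pointwise bounds, with explicit constants
  have bd1 : ∀ v η : V3, v ≠ η → |k v η| ≤ c * (A + D) *
      (m ^ (γ - 1) * ‖v - η‖⁻¹ * (1 + ‖v‖ + ‖η‖) ^ (-(1 - γ)) * profile v η) := by
    intro v η hne
    have h1 : gainBd γ m A B v η ≤ _ := min_le_left _ _
    have h2 := hloss m hm (1 - χ ‖v - η‖) (by linarith [(hχ01 ‖v - η‖).2])
      (by linarith [(hχ01 ‖v - η‖).1]) v η hne
      (fun ht => by rw [hχ1 _ ht.le, sub_self])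
    exact (hk v η).trans
      ((mul_le_mul_of_nonneg_left (add_le_add h1 h2) hc).trans_eq (by ring))
  have bd2 : ∀ v η : V3, v ≠ η → |k v η| ≤
      c * (‖v - η‖ ^ γ * exp (-(‖v‖ ^ 2 + ‖η‖ ^ 2) / 4)) +
      c * B * (‖v - η‖ ^ (-(3 - γ) / 2) * profile v η) := by
    intro v η hne
    have h1 : gainBd γ m A B v η ≤ _ := min_le_right _ _
    have h2 : ‖v - η‖ ^ γ * (1 - χ ‖v - η‖) * exp (-(‖v‖ ^ 2 + ‖η‖ ^ 2) / 4) ≤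
        ‖v - η‖ ^ γ * 1 * exp (-(‖v‖ ^ 2 + ‖η‖ ^ 2) / 4) := by
      gcongr
      linarith [(hχ01 ‖v - η‖).1]
    exact (hk v η).trans
      ((mul_le_mul_of_nonneg_left (add_le_add h1 h2) hc).trans_eq (by ring))
  have hwpos : ∀ v η : V3, 0 < wgt q β v / wgt q β η := fun v η => by unfold wgt; positivity
  have hne : ∀ v : V3, ∀ᵐ η : V3, v ≠ η := fun v => by
    filter_upwards [compl_mem_ae_iff.2 (measure_singleton v)] with η hη h
    exact hη h.symm
  refine ⟨k, fun g hg hM v => ?_, fun v η h => ?_, fun v η h => ?_, fun v => ?_, fun v => ?_⟩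
  · rw [Kop_sub_Kcut hγ1 hb hχm (fun t => (hχ01 t).1) (fun t => (hχ01 t).2) v hg hM]
    exact hkrep v g hg hM
  · have hp := profile_pos v η
    calc |k v η| ≤ _ := bd1 v η h
      _ ≤ C * (m ^ (γ - 1) * ‖v - η‖⁻¹ * (1 + ‖v‖ + ‖η‖) ^ (-(1 - γ)) * profile v η) := by
          gcongr; linarith
      _ = _ := by unfold profile; ring
  · have hp := profile_pos v η
    calc |k v η| ≤ _ := bd2 v η h
      _ ≤ C * (‖v - η‖ ^ γ * exp (-(‖v‖ ^ 2 + ‖η‖ ^ 2) / 4)) +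
          C * (‖v - η‖ ^ (-(3 - γ) / 2) * profile v η) := by
          gcongr <;> linarith
      _ = _ := by
          rw [show -(‖v‖ ^ 2 + ‖η‖ ^ 2) / 4 = -‖v‖ ^ 2 / 4 + -‖η‖ ^ 2 / 4 by ring, exp_add]
          unfold profile; ring
  · refine integral_le_of_lintegral_le (fun η => mul_nonneg (abs_nonneg _) (hwpos v η).le)
      (by positivity) ?_
    have hV : 0 < 1 + ‖v‖ := by positivity
    set R := c * (A + D) * (m ^ (γ - 1) * (1 + ‖v‖) ^ (γ - 1)) with hR
    have hR0 : 0 ≤ R := by positivity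
    calc _ ≤ ∫⁻ η : V3, ENNReal.ofReal R * ENNReal.ofReal (‖v - η‖ ^ (-1 : ℝ) *
          (profile v η * (wgt q β v / wgt q β η))) := by
          refine lintegral_mono_ae ?_
          filter_upwards [hne v] with η h
          have hp := profile_pos v η
          have hw := hwpos v η
          have hρ : 0 < ‖v - η‖ := norm_pos_iff.2 (sub_ne_zero.2 h)
          rw [← ENNReal.ofReal_mul hR0]
          refine ENNReal.ofReal_le_ofReal ?_
          have hmono : (1 + ‖v‖ + ‖η‖) ^ (-(1 - γ)) ≤ (1 + ‖v‖) ^ (γ - 1) := by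
            rw [neg_sub]
            exact rpow_le_rpow_of_nonpos hV (by linarith [norm_nonneg η]) (by linarith)
          calc _ ≤ c * (A + D) * (m ^ (γ - 1) * ‖v - η‖⁻¹ * (1 + ‖v‖) ^ (γ - 1) *
                profile v η) * (wgt q β v / wgt q β η) := by
                gcongr
                refine (bd1 v η h).trans ?_
                gcongr
            _ = _ := by rw [hR, rpow_neg_one]; ring
      _ ≤ ENNReal.ofReal R * ENNReal.ofReal (W1 * (1 + ‖v‖)⁻¹) := by
          rw [lintegral_const_mul' _ _ ENNReal.ofReal_ne_top]
          gcongr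
          exact hw1 v
      _ ≤ _ := by
          rw [← ENNReal.ofReal_mul hR0]
          refine ENNReal.ofReal_le_ofReal ?_
          have : (1 + ‖v‖) ^ (γ - 1) * (1 + ‖v‖)⁻¹ = (1 + ‖v‖) ^ (γ - 2) := by
            rw [← div_eq_mul_inv, ← rpow_sub_one hV.ne']; congr 1; ring
          calc R * (W1 * (1 + ‖v‖)⁻¹)
              = c * (A + D) * W1 * (m ^ (γ - 1) * (1 + ‖v‖) ^ (γ - 2)) := by
                rw [hR, ← this]; ring
            _ ≤ C * (m ^ (γ - 1) * (1 + ‖v‖) ^ (γ - 2)) := by gcongr; linarith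
            _ = _ := by ring
  · refine integral_le_of_lintegral_le (fun η => mul_nonneg (abs_nonneg _) (hwpos v η).le)
      (by positivity) ?_
    calc _ ≤ ∫⁻ η : V3, (ENNReal.ofReal c * ENNReal.ofReal (‖v - η‖ ^ (-(-γ)) *
            (profile v η * (wgt q β v / wgt q β η))) +
          ENNReal.ofReal (c * B) * ENNReal.ofReal (‖v - η‖ ^ (-((3 - γ) / 2)) *
            (profile v η * (wgt q β v / wgt q β η)))) := by
          refine lintegral_mono_ae ?_
          filter_upwards [hne v] with η h
          have hp := profile_pos v η
          have hw := hwpos v η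
          rw [← ENNReal.ofReal_mul hc, ← ENNReal.ofReal_mul p2,
            ← ENNReal.ofReal_add (by positivity) (by positivity)]
          refine ENNReal.ofReal_le_ofReal ?_
          have hexp : exp (-(‖v‖ ^ 2 + ‖η‖ ^ 2) / 4) ≤ profile v η :=
            (exp_le_exp.2 (by linarith [sq_nonneg ‖v‖, sq_nonneg ‖η‖])).trans
              (exp_le_profile h)
          calc _ ≤ (c * (‖v - η‖ ^ γ * profile v η) +
                c * B * (‖v - η‖ ^ (-(3 - γ) / 2) * profile v η)) *
                (wgt q β v / wgt q β η) := by
                gcongr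
                refine (bd2 v η h).trans ?_
                gcongr
            _ = _ := by rw [neg_neg, neg_div]; ring
      _ ≤ ENNReal.ofReal c * ENNReal.ofReal (W3 * (1 + ‖v‖)⁻¹) +
          ENNReal.ofReal (c * B) * ENNReal.ofReal (W2 * (1 + ‖v‖)⁻¹) := by
          rw [lintegral_add_left (by unfold profile wgt; fun_prop),
            lintegral_const_mul' _ _ ENNReal.ofReal_ne_top,
            lintegral_const_mul' _ _ ENNReal.ofReal_ne_top]
          gcongr
          · exact hw3 v
          · exact hw2 v
      _ ≤ _ := by
          rw [← ENNReal.ofReal_mul hc, ← ENNReal.ofReal_mul p2,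
            ← ENNReal.ofReal_add (by positivity) (by positivity)]
          refine ENNReal.ofReal_le_ofReal ?_
          calc c * (W3 * (1 + ‖v‖)⁻¹) + c * B * (W2 * (1 + ‖v‖)⁻¹)
              = (c * W3 + c * B * W2) * (1 + ‖v‖)⁻¹ := by ring
            _ ≤ C * (1 + ‖v‖)⁻¹ := by gcongr; linarith
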